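/- arXiv:2004.12653 — 5 statements merged into one kernel-verified Lean document; each statement's English description precedes it below -/
import Mathlib

section
/- The abelianization K/[K,K] of the kneading group K is a free abelian group of rank k+p; more precisely, there is a group isomorphism from K/[K,K] onto ℤ^{k+p} sending the class of each generator a₁,…,a_k, b₁,…,b_p to the corresponding standard basis vector. -/
/-- States of the kneading automaton: `a i` is the paper's `a_{i+1}` (for `i < k`),
`b i` is the paper's `b_{i+1}` (for `i < p`), and `id` is the identity state. -/
inductive KState : Type
  | a (i : ℕ)
  | b (i : ℕ)
  | id
  deriving DecidableEq

/-- Transition function of the kneading automaton `𝒦(x₁…x_k, y₁…y_p)`, where the paper's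
`x_i` is `x (i-1)` and `y_i` is `y (i-1)`.  `KTrans k p x y s z = (output letter, restriction)`. -/
def KTrans (k p : ℕ) (x y : ℕ → ℤ) : KState → ℤ → ℤ × KState
  | .a 0, z => (z + 1, .id)
  | .a (i+1), z => if z = x i then (z, .a i) else (z, .id)
  | .b 0, z =>
      if z = x (k-1) then (z, .a (k-1))
      else if z = y (p-1) then (z, .b (p-1))
      else (z, .id)
  | .b (i+1), z => if z = y i then (z, .b i) else (z, .id)
  | .id, z => (z, .id)

/-- The action of a state on the tree `ℤ*` of finite words over `ℤ`,
defined recursively by `q(zv) = q(z)·(q|_z)(v)`. -/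
def stateAct (k p : ℕ) (x y : ℕ → ℤ) : KState → List ℤ → List ℤ
  | _, [] => []
  | s, z :: v => (KTrans k p x y s z).1 :: stateAct k p x y (KTrans k p x y s z).2 v

/-- The generating states `S = {a₁,…,a_k, b₁,…,b_p}`. -/
def IsGen (k p : ℕ) (s : KState) : Prop :=
  (∃ i, i < k ∧ s = .a i) ∨ (∃ j, j < p ∧ s = .b j)

/-- The generators of the kneading group, as permutations of `List ℤ` whose underlying
function is the action of a generating state. -/
def SGens (k p : ℕ) (x y : ℕ → ℤ) : Set (Equiv.Perm (List ℤ)) :=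
  {g | ∃ s : KState, IsGen k p s ∧ ⇑g = stateAct k p x y s}

/-- The kneading group `K = 𝕂(x₁…x_k, y₁…y_p)`. -/
def Kgroup (k p : ℕ) (x y : ℕ → ℤ) : Subgroup (Equiv.Perm (List ℤ)) :=
  Subgroup.closure (SGens k p x y)

section helpers

variable (k p : ℕ) (x y : ℕ → ℤ)

/-- shift of the first letter -/
def kshift : KState → ℤ
  | .a 0 => 1
  | _ => 0

theorem ktrans_fst (s : KState) (z : ℤ) : (KTrans k p x y s z).1 = z + kshift s := by
  rcases s with (_ | i) | (_ | i) | _ <;> simp only [KTrans, kshift] <;> (try split_ifs) <;> simp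

/-- inverse action -/
def stateInv : KState → List ℤ → List ℤ
  | _, [] => []
  | s, z :: v => (z - kshift s) :: stateInv (KTrans k p x y s (z - kshift s)).2 v

theorem stateInv_left (v : List ℤ) : ∀ s, stateInv k p x y s (stateAct k p x y s v) = v := by
  induction v with
  | nil => intro s; simp [stateAct, stateInv]
  | cons z v ih => intro s; simp [stateAct, stateInv, ktrans_fst, ih]

theorem stateInv_right (v : List ℤ) : ∀ s, stateAct k p x y s (stateInv k p x y s v) = v := by
  induction v with
  | nil => intro s; simp [stateAct, stateInv]
  | cons z v ih => intro s; simp [stateAct, stateInv, ktrans_fst, ih]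

/-- the permutation of a state -/
def permOf (s : KState) : Equiv.Perm (List ℤ) where
  toFun := stateAct k p x y s
  invFun := stateInv k p x y s
  left_inv v := stateInv_left k p x y v s
  right_inv v := stateInv_right k p x y v s

theorem permOf_cons (s : KState) (z : ℤ) (v : List ℤ) :
    permOf k p x y s (z :: v) = (z + kshift s) :: permOf k p x y (KTrans k p x y s z).2 v := by
  change stateAct k p x y s (z :: v) = _
  rw [stateAct, ktrans_fst]; rfl

theorem permOf_id : permOf k p x y .id = 1 := by
  ext1 v
  induction v with
  | nil => rfl
  | cons z v ih => rw [permOf_cons]; simp only [KTrans, ih]; simp [kshift]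

theorem permOf_mem (s : KState) (h : IsGen k p s ∨ s = .id) :
    permOf k p x y s ∈ Kgroup k p x y := by
  rcases h with h | h
  · exact Subgroup.subset_closure ⟨s, h, rfl⟩
  · rw [h, permOf_id]; exact one_mem _

theorem ktrans_gen (hk : 1 ≤ k) (hp : 1 ≤ p) (s : KState) (h : IsGen k p s) (z : ℤ) :
    IsGen k p (KTrans k p x y s z).2 ∨ (KTrans k p x y s z).2 = .id := by
  rcases h with ⟨_ | i, hi, rfl⟩ | ⟨_ | i, hi, rfl⟩ <;> simp only [KTrans] <;> (try split_ifs) <;>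
    simp [IsGen] <;> omega

theorem ktrans_fin (s : KState) : {z | (KTrans k p x y s z).2 ≠ .id}.Finite := by
  rcases s with (_ | i) | (_ | i) | _
  · simp [KTrans]
  · apply (Set.finite_singleton (x i)).subset
    intro z; simp only [KTrans, Set.mem_ofPred_eq]; split_ifs <;> simp_all
  · apply (Set.toFinite {x (k-1), y (p-1)}).subset
    intro z; simp only [KTrans, Set.mem_ofPred_eq]; split_ifs <;> simp_all
  · apply (Set.finite_singleton (y i)).subset
    intro z; simp only [KTrans, Set.mem_ofPred_eq]; split_ifs <;> simp_all
  · simp [KTrans]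

/-- wreath decomposition -/
def Decomp (g : Equiv.Perm (List ℤ)) (t : ℤ) (c : ℤ → Kgroup k p x y) : Prop :=
  g [] = [] ∧ (∀ z v, g (z :: v) = (z + t) :: (c z : Equiv.Perm (List ℤ)) v) ∧
    {z | c z ≠ 1}.Finite

variable {k p x y}

theorem Decomp.unique {g : Equiv.Perm (List ℤ)} {t t' : ℤ} {c c' : ℤ → Kgroup k p x y}
    (h : Decomp k p x y g t c) (h' : Decomp k p x y g t' c') : t = t' ∧ c = c' := by
  have key : ∀ z v, (z + t) :: (c z : Equiv.Perm (List ℤ)) v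
      = (z + t') :: (c' z : Equiv.Perm (List ℤ)) v := fun z v => by
    rw [← h.2.1, ← h'.2.1]
  simp only [List.cons.injEq] at key
  refine ⟨by simpa using (key 0 []).1, ?_⟩
  funext z
  apply Subtype.ext
  ext1 v
  exact (key z v).2

theorem Decomp.one : Decomp k p x y 1 0 (fun _ => 1) := by
  refine ⟨rfl, by simp, by simp⟩

theorem Decomp.mul {g h : Equiv.Perm (List ℤ)} {t t' : ℤ} {c c' : ℤ → Kgroup k p x y}
    (hg : Decomp k p x y g t c) (hh : Decomp k p x y h t' c') :
    Decomp k p x y (g * h) (t + t') (fun z => c (z + t') * c' z) := by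
  refine ⟨by simp [hh.1, hg.1], ?_, ?_⟩
  · intro z v
    simp only [Equiv.Perm.mul_apply, hh.2.1, hg.2.1, Subgroup.coe_mul]
    congr 1; ring
  · have h1 : ((fun z => z + t') ⁻¹' {z | c z ≠ 1}).Finite :=
      hg.2.2.preimage (add_left_injective t').injOn
    apply (h1.union hh.2.2).subset
    intro z hz
    by_contra hcon
    simp only [Set.mem_union, Set.mem_preimage, Set.mem_ofPred_eq, not_or, not_not] at hcon
    exact hz (by simp [hcon.1, hcon.2])

theorem Decomp.inv {g : Equiv.Perm (List ℤ)} {t : ℤ} {c : ℤ → Kgroup k p x y}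
    (hg : Decomp k p x y g t c) :
    Decomp k p x y g⁻¹ (-t) (fun z => (c (z - t))⁻¹) := by
  refine ⟨?_, ?_, ?_⟩
  · rw [Equiv.Perm.inv_eq_iff_eq, hg.1]
  · intro z v
    rw [Equiv.Perm.inv_eq_iff_eq, hg.2.1]
    simp [← sub_eq_add_neg]
  · have h1 : ((fun z => z - t) ⁻¹' {z | c z ≠ 1}).Finite :=
      hg.2.2.preimage (sub_left_injective).injOn
    apply h1.subset
    intro z hz
    simpa using hz

/-- element of K attached to a state, 1 if not a generator -/
noncomputable def elt (k p : ℕ) (x y : ℕ → ℤ) (s : KState) : Kgroup k p x y := by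
  classical
  exact if h : IsGen k p s ∨ s = .id then ⟨permOf k p x y s, permOf_mem k p x y s h⟩ else 1

theorem elt_coe (s : KState) (h : IsGen k p s ∨ s = .id) :
    (elt k p x y s : Equiv.Perm (List ℤ)) = permOf k p x y s := by
  simp [elt, h]

theorem elt_id : elt k p x y .id = 1 := by
  apply Subtype.ext
  rw [elt_coe _ (Or.inr rfl), permOf_id]; rfl

theorem Decomp.gen (hk : 1 ≤ k) (hp : 1 ≤ p) (s : KState) (h : IsGen k p s) :
    Decomp k p x y (permOf k p x y s) (kshift s) (fun z => elt k p x y (KTrans k p x y s z).2) := by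
  refine ⟨rfl, ?_, ?_⟩
  · intro z v
    rw [permOf_cons, elt_coe _ (ktrans_gen k p x y hk hp s h z)]
  · apply (ktrans_fin k p x y s).subset
    intro z hz h0
    exact hz (by simp only [h0, elt_id])

theorem eq_permOf {g : Equiv.Perm (List ℤ)} {s : KState} (h : ⇑g = stateAct k p x y s) :
    g = permOf k p x y s := by
  ext1 v; rw [h]; rfl

theorem exists_decomp (hk : 1 ≤ k) (hp : 1 ≤ p) (g : Kgroup k p x y) :
    ∃ tc : ℤ × (ℤ → Kgroup k p x y), Decomp k p x y g tc.1 tc.2 := by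
  obtain ⟨g, hg⟩ := g
  change ∃ tc : ℤ × (ℤ → Kgroup k p x y), Decomp k p x y g tc.1 tc.2
  induction hg using Subgroup.closure_induction with
  | mem g hg =>
    obtain ⟨s, hs, h⟩ := hg
    rw [eq_permOf h]
    exact ⟨(_, _), Decomp.gen hk hp s hs⟩
  | one => exact ⟨(_, _), Decomp.one⟩
  | mul g h _ _ ig ih =>
    obtain ⟨_, ig⟩ := ig
    obtain ⟨_, ih⟩ := ih
    exact ⟨(_, _), ig.mul ih⟩
  | inv g _ ig =>
    obtain ⟨_, ig⟩ := ig
    exact ⟨(_, _), ig.inv⟩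

theorem exists_chars (hk : 1 ≤ k) (hp : 1 ≤ p) :
    ∃ χ : ℕ → (Kgroup k p x y →* Multiplicative ℤ),
      (∀ g t c, Decomp k p x y (g : Kgroup k p x y) t c → (χ 0 g).toAdd = t) ∧
      (∀ n g t c, Decomp k p x y (g : Kgroup k p x y) t c →
        (χ (n+1) g).toAdd = ∑ᶠ z, (χ n (c z)).toAdd) := by
  choose tc htc using exists_decomp (x := x) (y := y) hk hp
  have tc_eq : ∀ g t c, Decomp k p x y (g : Kgroup k p x y) t c → tc g = (t, c) :=
    fun g t c h => Prod.ext ((htc g).unique h).1 ((htc g).unique h).2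
  have tc_mul : ∀ g h, tc (g * h) =
      ((tc g).1 + (tc h).1, fun z => (tc g).2 (z + (tc h).1) * (tc h).2 z) := fun g h =>
    tc_eq _ _ _ ((htc g).mul (htc h))
  let χ0 : Kgroup k p x y →* Multiplicative ℤ :=
    MonoidHom.mk' (fun g => Multiplicative.ofAdd (tc g).1) (fun g h => by
      rw [tc_mul]; rfl)
  have fin : ∀ (χ : Kgroup k p x y →* Multiplicative ℤ) g,
      (Function.support fun z => (χ ((tc g).2 z)).toAdd).Finite := fun χ g => by
    apply (htc g).2.2.subset
    intro z hz h1
    exact hz (by simp [h1])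
  let step : (Kgroup k p x y →* Multiplicative ℤ) → (Kgroup k p x y →* Multiplicative ℤ) :=
    fun χ => MonoidHom.mk' (fun g => Multiplicative.ofAdd (∑ᶠ z, (χ ((tc g).2 z)).toAdd))
      (fun g h => by
        rw [tc_mul, ← ofAdd_add]
        congr 1
        simp only [map_mul, toAdd_mul]
        rw [finsum_add_distrib _ (fin χ h)]
        · congr 1
          exact finsum_comp_equiv (Equiv.addRight (tc h).1)
            (f := fun z => (χ ((tc g).2 z)).toAdd)
        · exact (fin χ g).preimage (f := fun z => z + (tc h).1) (add_left_injective _).injOn)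
  refine ⟨fun n => step^[n] χ0, ?_, ?_⟩
  · intro g t c h
    simp [χ0, tc_eq g t c h]
  · intro n g t c h
    simp only [Function.iterate_succ_apply']
    change (Multiplicative.ofAdd (∑ᶠ z, ((step^[n] χ0) ((tc g).2 z)).toAdd)).toAdd = _
    rw [tc_eq g t c h]; rfl

/-- linear ordering of the generators -/
def lin (k : ℕ) (m : ℕ) : KState := if m < k then .a m else .b (m - k)

theorem lin_gen {m : ℕ} (hm : m < k + p) : IsGen k p (lin k m) := by
  unfold lin IsGen
  split_ifs with h
  · exact Or.inl ⟨m, h, rfl⟩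
  · exact Or.inr ⟨m - k, by omega, rfl⟩

theorem ktrans_lin_zero (hk : 1 ≤ k) (z : ℤ) :
    (KTrans k p x y (lin k 0) z).2 = .id := by
  have : 0 < k := hk
  simp [lin, this, KTrans]

theorem ktrans_lin_succ (hk : 1 ≤ k) (hp : 1 ≤ p) (m : ℕ) : ∃ z₀,
    (KTrans k p x y (lin k (m+1)) z₀).2 = lin k m ∧ ∀ z, z ≠ z₀ →
      (KTrans k p x y (lin k (m+1)) z).2 = .id ∨
      (KTrans k p x y (lin k (m+1)) z).2 = lin k (k + p - 1) := by
  rcases lt_trichotomy (m+1) k with h | h | h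
  · have h' : m < k := by omega
    refine ⟨x m, ?_, ?_⟩
    · simp [lin, h, h', KTrans]
    · intro z hz
      simp [lin, h, KTrans, hz]
  · have h' : m < k := by omega
    have e : k - 1 = m := by omega
    have e2 : ¬ (k + p - 1 < k) := by omega
    have e3 : k + p - 1 - k = p - 1 := by omega
    refine ⟨x (k-1), ?_, ?_⟩
    · simp [lin, h, h', KTrans, e]
    · intro z hz
      simp only [lin, h, lt_irrefl, if_false, Nat.sub_self, KTrans, hz, e2, e3]
      split_ifs <;> simp
  · have h1 : ¬ (m + 1 < k) := by omega
    have h2 : ¬ (m < k) := by omega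
    have e : m + 1 - k = (m - k) + 1 := by omega
    refine ⟨y (m-k), ?_, ?_⟩
    · simp [lin, h1, h2, KTrans, e]
    · intro z hz
      simp [lin, h1, KTrans, e, hz]

theorem kshift_lin (hk : 1 ≤ k) (m : ℕ) : kshift (lin k m) = if m = 0 then 1 else 0 := by
  rcases m with _ | m
  · have : 0 < k := hk
    simp [lin, this, kshift]
  · unfold lin
    split_ifs <;> simp_all [kshift]

theorem chars_lin (hk : 1 ≤ k) (hp : 1 ≤ p) (χ : ℕ → (Kgroup k p x y →* Multiplicative ℤ))
    (h0 : ∀ g t c, Decomp k p x y (g : Kgroup k p x y) t c → (χ 0 g).toAdd = t)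
    (hs : ∀ n g t c, Decomp k p x y (g : Kgroup k p x y) t c →
        (χ (n+1) g).toAdd = ∑ᶠ z, (χ n (c z)).toAdd) (n : ℕ) :
    n < k + p → ∀ m, m < k + p →
      (χ n (elt k p x y (lin k m))).toAdd = if m = n then 1 else 0 := by
  have dec : ∀ m, m < k + p → Decomp k p x y (elt k p x y (lin k m)) (kshift (lin k m))
      (fun z => elt k p x y (KTrans k p x y (lin k m) z).2) := fun m hm => by
    rw [elt_coe _ (Or.inl (lin_gen hm))]
    exact Decomp.gen hk hp _ (lin_gen hm)
  induction n with
  | zero =>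
    intro _ m hm
    rw [h0 _ _ _ (dec m hm), kshift_lin hk]
  | succ n ih =>
    intro hn m hm
    have ih := ih (by omega)
    rw [hs _ _ _ _ (dec m hm)]
    rcases m with _ | m
    · simp [ktrans_lin_zero hk, elt_id]
    · obtain ⟨z₀, hz₀, hz⟩ := ktrans_lin_succ (x := x) (y := y) hk hp m
      rw [finsum_eq_single _ z₀, hz₀, ih m (by omega)]
      · simp
      · intro z hne
        rcases hz z hne with e | e
        · simp [e, elt_id]
        · rw [e, ih _ (by omega), if_neg (by omega)]

end helpers

theorem stmt4 (k p : ℕ) (hk : 1 ≤ k) (hp : 1 ≤ p) (x y : ℕ → ℤ)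
    (hxy : x (k - 1) ≠ y (p - 1)) :
    ∃ e : Abelianization ↥(Kgroup k p x y) ≃* Multiplicative (Fin (k + p) → ℤ),
      (∀ (g : ↥(Kgroup k p x y)) (i : ℕ) (hi : i < k),
          ⇑(g : Equiv.Perm (List ℤ)) = stateAct k p x y (.a i) →
          e (Abelianization.of g) =
            Multiplicative.ofAdd (Pi.single (⟨i, by omega⟩ : Fin (k + p)) (1 : ℤ))) ∧
      (∀ (g : ↥(Kgroup k p x y)) (j : ℕ) (hj : j < p),
          ⇑(g : Equiv.Perm (List ℤ)) = stateAct k p x y (.b j) →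
          e (Abelianization.of g) =
            Multiplicative.ofAdd (Pi.single (⟨k + j, by omega⟩ : Fin (k + p)) (1 : ℤ))) := by
  classical
  obtain ⟨χ, h0, hs⟩ := exists_chars (x := x) (y := y) hk hp
  have hχ := chars_lin hk hp χ h0 hs
  let Φ : Kgroup k p x y →* Multiplicative (Fin (k + p) → ℤ) :=
    MonoidHom.mk' (fun g => Multiplicative.ofAdd (fun i : Fin (k + p) => (χ i g).toAdd))
      (fun g h => by
        rw [← ofAdd_add]; congr 1; funext i; simp)
  have hΦ : ∀ m (hm : m < k + p), Φ (elt k p x y (lin k m)) =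
      Multiplicative.ofAdd (Pi.single (⟨m, hm⟩ : Fin (k + p)) (1 : ℤ)) := by
    intro m hm
    change Multiplicative.ofAdd _ = _
    congr 1
    funext i
    rw [hχ i i.2 m hm, Pi.single_apply]
    simp only [Fin.ext_iff, eq_comm]
  let F := Abelianization.lift Φ
  let I : Multiplicative (Fin (k + p) → ℤ) →* Abelianization (Kgroup k p x y) :=
    MonoidHom.mk' (fun f => ∏ i : Fin (k + p),
        (Abelianization.of (elt k p x y (lin k i))) ^ (f.toAdd i))
      (fun f g => by
        simp [zpow_add, Finset.prod_mul_distrib])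
  have hI : ∀ m (hm : m < k + p),
      I (Multiplicative.ofAdd (Pi.single (⟨m, hm⟩ : Fin (k + p)) (1 : ℤ))) =
        Abelianization.of (elt k p x y (lin k m)) := by
    intro m hm
    change ∏ i : Fin (k + p), _ = _
    rw [Finset.prod_eq_single (⟨m, hm⟩ : Fin (k + p))]
    · simp
    · intro b _ hb
      simp [Pi.single_apply, hb]
    · simp
  have gen_lin : ∀ s, IsGen k p s → ∃ m, m < k + p ∧ s = lin k m := by
    rintro s (⟨i, hi, rfl⟩ | ⟨j, hj, rfl⟩)
    · exact ⟨i, by omega, by simp [lin, hi]⟩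
    · exact ⟨k + j, by omega, by simp [lin]⟩
  have elt_eq : ∀ (g : Kgroup k p x y) m, m < k + p →
      ⇑(g : Equiv.Perm (List ℤ)) = stateAct k p x y (lin k m) → g = elt k p x y (lin k m) := by
    intro g m hm h
    apply Subtype.ext
    rw [elt_coe _ (Or.inl (lin_gen hm)), eq_permOf h]
  have left : I.comp F = MonoidHom.id _ := by
    apply Abelianization.hom_ext
    apply MonoidHom.ext
    rintro ⟨g, hg⟩
    induction hg using Subgroup.closure_induction with
    | mem g hg =>
      obtain ⟨s, hs, h⟩ := id hg
      obtain ⟨m, hm, rfl⟩ := gen_lin s hs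
      have e := elt_eq ⟨g, Subgroup.subset_closure hg⟩ m hm h
      rw [e]
      simp [F, hΦ m hm, hI m hm]
    | one => exact map_one _
    | mul g h hg hh ig ih =>
      have := congrArg₂ (· * ·) ig ih
      simp only [← map_mul] at this
      exact this
    | inv g hg ig =>
      have := congrArg (·⁻¹) ig
      simp only [← map_inv] at this
      exact this
  have right : F.comp I = MonoidHom.id _ := by
    apply MonoidHom.ext
    intro f
    change F (∏ i : Fin (k + p), _) = f
    rw [map_prod]
    simp only [map_zpow, F, Abelianization.lift_apply_of]
    simp only [fun i : Fin (k + p) => hΦ i i.2]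
    apply Multiplicative.toAdd.injective
    rw [toAdd_prod]
    funext j
    simp [Finset.sum_apply, Pi.single_apply]
  refine ⟨MonoidHom.toMulEquiv F I left right, ?_, ?_⟩
  · intro g i hi h
    have e : lin k i = .a i := by simp [lin, hi]
    rw [elt_eq g i (by omega) (by rw [e, h])]
    simpa [F] using hΦ i (by omega)
  · intro g j hj h
    have e : lin k (k + j) = .b j := by simp [lin]
    rw [elt_eq g (k + j) (by omega) (by rw [e, h])]
    simpa [F] using hΦ (k + j) (by omega)
end

section
/- The kneading group K has exponential growth: letting B_n denote the set of elements of K expressible as a product of at most n elements of S ∪ S⁻¹, there exists a real number C > 1 such that B_n is finite with |B_n| ≥ Cⁿ for all n ≥ 1. -/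
/-- The ball of radius `n`: elements expressible as a product of at most `n`
elements of `S ∪ S⁻¹`. -/
def wordBall {G : Type*} [Group G] (S : Set G) (n : ℕ) : Set G :=
  {g | ∃ l : List G, l.length ≤ n ∧ (∀ a ∈ l, a ∈ S ∨ a⁻¹ ∈ S) ∧ l.prod = g}

theorem KTrans_bij (k p : ℕ) (x y : ℕ → ℤ) (s : KState) :
    Function.Bijective (fun z => (KTrans k p x y s z).1) := by
  have key : s = .a 0 ∨ ∀ z, (KTrans k p x y s z).1 = z := by
    rcases s with (_ | i) | (_ | i) | _
    · exact Or.inl rfl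
    all_goals
      right
      intro z
      simp only [KTrans]
      try split_ifs
      all_goals rfl
  rcases key with rfl | h
  · simp only [KTrans]
    exact (Equiv.addRight (1 : ℤ)).bijective
  · simp only [h]
    exact Function.bijective_id

theorem stateAct_inj (k p : ℕ) (x y : ℕ → ℤ) :
    ∀ (u v : List ℤ) (s : KState), stateAct k p x y s u = stateAct k p x y s v → u = v
  | [], [], _, _ => rfl
  | [], _ :: _, _, h => by simp [stateAct] at h
  | _ :: _, [], _, h => by simp [stateAct] at h
  | z :: u, w :: v, s, h => by
    simp only [stateAct, List.cons.injEq] at h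
    obtain ⟨h1, h2⟩ := h
    have hz : z = w := (KTrans_bij k p x y s).1 h1
    subst hz
    rw [stateAct_inj k p x y u v _ h2]

theorem stateAct_surj (k p : ℕ) (x y : ℕ → ℤ) :
    ∀ (v : List ℤ) (s : KState), ∃ u, stateAct k p x y s u = v
  | [], _ => ⟨[], rfl⟩
  | w :: v, s => by
    obtain ⟨z, hz⟩ := (KTrans_bij k p x y s).2 w
    obtain ⟨u, hu⟩ := stateAct_surj k p x y v (KTrans k p x y s z).2
    refine ⟨z :: u, ?_⟩
    simp only [stateAct, hu]
    simpa using hz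

/-- The permutation of words induced by a state. -/
noncomputable def statePerm (k p : ℕ) (x y : ℕ → ℤ) (s : KState) : Equiv.Perm (List ℤ) :=
  Equiv.ofBijective (stateAct k p x y s)
    ⟨fun u v h => stateAct_inj k p x y u v s h, fun v => stateAct_surj k p x y v s⟩

theorem statePerm_apply (k p : ℕ) (x y : ℕ → ℤ) (s : KState) (v : List ℤ) :
    statePerm k p x y s v = stateAct k p x y s v := rfl

theorem SGens_finite (k p : ℕ) (x y : ℕ → ℤ) : (SGens k p x y).Finite := by
  have hfin : (Set.image (statePerm k p x y)
      (Set.image KState.a (Set.Iio k) ∪ Set.image KState.b (Set.Iio p))).Finite :=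
    (((Set.finite_Iio k).image _).union ((Set.finite_Iio p).image _)).image _
  refine hfin.subset ?_
  rintro g ⟨s, hs, hg⟩
  refine ⟨s, ?_, ?_⟩
  · rcases hs with ⟨i, hi, rfl⟩ | ⟨i, hi, rfl⟩
    · exact Or.inl ⟨i, hi, rfl⟩
    · exact Or.inr ⟨i, hi, rfl⟩
  · ext1 v
    rw [hg, statePerm_apply]

theorem wordBall_finite {G : Type*} [Group G] (S : Set G) (hS : S.Finite) (n : ℕ) :
    (wordBall S n).Finite := by
  induction n with
  | zero =>
    refine (Set.finite_singleton (1 : G)).subset ?_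
    rintro g ⟨l, hl, -, rfl⟩
    have : l = [] := List.length_eq_zero_iff.1 (Nat.le_zero.1 hl)
    simp [this]
  | succ n ih =>
    have hT : (S ∪ Set.image Inv.inv S).Finite := hS.union (hS.image _)
    refine ((Set.Finite.image2 (fun a b => a * b) hT ih).union (Set.finite_singleton 1)).subset ?_
    rintro g ⟨l, hl, hm, rfl⟩
    cases l with
    | nil => right; simp
    | cons a l =>
      left
      refine ⟨a, ?_, l.prod, ⟨l, by simpa using hl, fun b hb => hm b (by simp [hb]), rfl⟩, by simp⟩
      rcases hm a (by simp) with h | h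
      · exact Or.inl h
      · exact Or.inr ⟨a⁻¹, h, by simp⟩

/-- Lamplighter words in `A` and `G`; the head of the list acts first. -/
def lampWord {M : Type*} [Group M] (A G : M) : List Bool → List M
  | [] => []
  | e :: es => lampWord A G es ++ (if e then [A, G] else [A])

theorem lampWord_length {M : Type*} [Group M] (A G : M) (es : List Bool) :
    (lampWord A G es).length ≤ 2 * es.length := by
  induction es with
  | nil => simp [lampWord]
  | cons e es ih => cases e <;> simp [lampWord] <;> omega

theorem lampWord_mem {M : Type*} [Group M] (A G : M) (es : List Bool) :
    ∀ g ∈ lampWord A G es, g = A ∨ g = G := by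
  induction es with
  | nil => simp [lampWord]
  | cons e es ih =>
    intro g hg
    cases e <;> simp [lampWord] at hg <;> rcases hg with hg | hg
    all_goals first | exact ih g hg | tauto

theorem lampWord_past (A G : Equiv.Perm (List ℤ)) (x0 : ℤ)
    (hA : ∀ z w, A [z, w] = [z + 1, w])
    (hG : ∀ z w, G [z, w] = [z, if z = x0 then w + 1 else w]) (es : List Bool) :
    ∀ z w, x0 < z → (lampWord A G es).prod [z, w] = [z + es.length, w] := by
  induction es with
  | nil => intro z w _; simp [lampWord]
  | cons e es ih =>
    intro z w hz
    have h1 : z ≠ x0 := by omega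
    cases e <;> simp [lampWord, hA, hG, h1, ih (z + 1) w (by omega)] <;> ring

theorem lampWord_at (A G : Equiv.Perm (List ℤ)) (x0 : ℤ)
    (hA : ∀ z w, A [z, w] = [z + 1, w])
    (hG : ∀ z w, G [z, w] = [z, if z = x0 then w + 1 else w]) :
    ∀ (es fs : List Bool), es.length = fs.length →
      (lampWord A G es).prod = (lampWord A G fs).prod → es = fs := by
  have hlev : ∀ (es fs : List Bool), es.length = fs.length →
      (∀ j : ℕ, (lampWord A G es).prod [x0 - j, 0] = (lampWord A G fs).prod [x0 - j, 0]) →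
        es = fs := by
    intro es
    induction es with
    | nil => intro fs hl _; exact (List.length_eq_zero_iff.1 hl.symm).symm
    | cons e es ih =>
      intro fs hl h
      cases fs with
      | nil => simp at hl
      | cons f fs =>
        have hl' : es.length = fs.length := by simpa using hl
        have he : e = f := by
          have h0 := h 0
          cases e <;> cases f <;>
            simp [lampWord, hA, hG, lampWord_past A G x0 hA hG _ (x0 + 1) _ (by omega)] at h0 ⊢
        rw [ih fs hl' ?_, he]
        intro j
        have hj := h (j + 1)
        have h1 : x0 - ((j : ℤ) + 1) ≠ x0 := by omega
        have h2 : x0 - ((j : ℤ) + 1) + 1 = x0 - j := by ring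
        have h3 : ¬ ((j : ℤ) + 1 = 0) := by omega
        subst he
        push_cast at hj
        cases e <;> simpa [lampWord, hA, hG, h1, h2, h3] using hj
  intro es fs hl h
  exact hlev es fs hl fun j => by rw [h]

theorem exists_gens (k p : ℕ) (hk : 1 ≤ k) (hp : 1 ≤ p) (x y : ℕ → ℤ) :
    ∃ A ∈ SGens k p x y, ∃ G ∈ SGens k p x y,
      (∀ z w, A [z, w] = [z + 1, w]) ∧
      (∀ z w, G [z, w] = [z, if z = x 0 then w + 1 else w]) := by
  refine ⟨statePerm k p x y (.a 0), ⟨_, Or.inl ⟨0, hk, rfl⟩, rfl⟩, ?_⟩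
  by_cases h : k = 1
  · subst h
    refine ⟨statePerm 1 p x y (.b 0), ⟨_, Or.inr ⟨0, hp, rfl⟩, rfl⟩, ?_, ?_⟩
    · intro z w
      simp [statePerm_apply, stateAct, KTrans]
    · intro z w
      have hb : ∀ i u, (KTrans 1 p x y (.b i) u).1 = u := by
        intro i u
        cases i <;> simp only [KTrans] <;> split_ifs <;> rfl
      rw [statePerm_apply]
      by_cases h1 : z = x 0
      · simp [stateAct, KTrans, h1]
      · by_cases h2 : z = y (p - 1)
        · have h3 : y (p - 1) ≠ x 0 := h2 ▸ h1
          have h4 : KTrans 1 p x y (.b 0) z = (z, .b (p - 1)) := by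
            simp [KTrans, h2, h3]
          simp [stateAct, h4, hb, h1]
        · simp [stateAct, KTrans, h1, h2]
  · refine ⟨statePerm k p x y (.a 1), ⟨_, Or.inl ⟨1, by omega, rfl⟩, rfl⟩, ?_, ?_⟩
    · intro z w
      simp [statePerm_apply, stateAct, KTrans]
    · intro z w
      rw [statePerm_apply]
      by_cases h1 : z = x 0
      · simp [stateAct, KTrans, h1]
      · simp [stateAct, KTrans, h1]

theorem stmt6 (k p : ℕ) (hk : 1 ≤ k) (hp : 1 ≤ p) (x y : ℕ → ℤ)
    (hxy : x (k - 1) ≠ y (p - 1)) :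
    ∃ C : ℝ, 1 < C ∧ ∀ n : ℕ, 1 ≤ n →
      (wordBall (SGens k p x y) n).Finite ∧
      C ^ n ≤ ((wordBall (SGens k p x y) n).ncard : ℝ) := by
  obtain ⟨A, hAS, G, hGS, hA, hG⟩ := exists_gens k p hk hp x y
  refine ⟨11 / 10, by norm_num, fun n hn => ?_⟩
  have hfin := wordBall_finite _ (SGens_finite k p x y) n
  refine ⟨hfin, ?_⟩
  rcases Nat.eq_or_lt_of_le hn with rfl | hn2
  · have hne : (1 : Equiv.Perm (List ℤ)) ≠ A := by
      intro h
      have := hA 0 0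
      rw [← h] at this
      simp at this
    have hsub : ({1, A} : Set (Equiv.Perm (List ℤ))) ⊆ wordBall (SGens k p x y) 1 := by
      rintro g (rfl | rfl)
      · exact ⟨[], by simp, by simp, by simp⟩
      · exact ⟨[g], by simp, by simpa using Or.inl hAS, by simp⟩
    have hc := Set.ncard_le_ncard hsub hfin
    rw [Set.ncard_pair hne] at hc
    have hc' : (2 : ℝ) ≤ ((wordBall (SGens k p x y) 1).ncard : ℝ) := by exact_mod_cast hc
    linarith
  · have hinj : Function.Injective
        (fun v : List.Vector Bool (n / 2) => (lampWord A G v.1).prod) := by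
      intro u v h
      exact Subtype.ext (lampWord_at A G (x 0) hA hG _ _ (by rw [u.2, v.2]) h)
    have hsub : Set.range (fun v : List.Vector Bool (n / 2) => (lampWord A G v.1).prod) ⊆
        wordBall (SGens k p x y) n := by
      rintro g ⟨v, rfl⟩
      refine ⟨lampWord A G v.1, ?_, ?_, rfl⟩
      · have h1 := lampWord_length A G v.1
        rw [v.2] at h1
        omega
      · intro g hg
        rcases lampWord_mem A G v.1 g hg with rfl | rfl
        · exact Or.inl hAS
        · exact Or.inl hGS
    have hc := Set.ncard_le_ncard hsub hfin
    rw [← Set.image_univ, Set.ncard_image_of_injective _ hinj, Set.ncard_univ,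
      Nat.card_eq_fintype_card, card_vector, Fintype.card_bool] at hc
    have hc' : (2 : ℝ) ^ (n / 2) ≤ ((wordBall (SGens k p x y) n).ncard : ℝ) := by
      exact_mod_cast hc
    calc (11 / 10 : ℝ) ^ n ≤ (11 / 10 : ℝ) ^ (4 * (n / 2)) :=
          pow_le_pow_right₀ (by norm_num) (by omega)
      _ = ((11 / 10 : ℝ) ^ 4) ^ (n / 2) := by rw [pow_mul]
      _ ≤ 2 ^ (n / 2) := pow_le_pow_left₀ (by norm_num) (by norm_num) _
      _ ≤ _ := hc'
end

section
/- The kneading group K is level-transitive: for every m ∈ ℕ and all v, w ∈ ℤ^m there exists g ∈ K with g(v) = w. -/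
theorem KTrans_inj (k p : ℕ) (x y : ℕ → ℤ) (s : KState) (z z' : ℤ)
    (h : (KTrans k p x y s z).1 = (KTrans k p x y s z').1) : z = z' := by
  rcases s with (_ | i) | (_ | i) | _ <;> simp only [KTrans] at h <;> (try split_ifs at h) <;> simp_all

theorem KTrans_surj (k p : ℕ) (x y : ℕ → ℤ) (s : KState) (z : ℤ) :
    ∃ z', (KTrans k p x y s z').1 = z := by
  rcases s with (_ | i) | (_ | i) | _
  · exact ⟨z - 1, by simp [KTrans]⟩
  all_goals exact ⟨z, by simp only [KTrans] <;> split_ifs <;> rfl⟩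

theorem stateAct_bij (k p : ℕ) (x y : ℕ → ℤ) (s : KState) :
    Function.Bijective (stateAct k p x y s) := by
  constructor
  · intro v
    induction v generalizing s with
    | nil => intro w h; cases w <;> simp_all [stateAct]
    | cons z v ih =>
      intro w h
      cases w with
      | nil => simp [stateAct] at h
      | cons z' w =>
        simp only [stateAct, List.cons.injEq] at h
        obtain ⟨h1, h2⟩ := h
        have := KTrans_inj k p x y s z z' h1
        subst this
        rw [ih _ h2]
  · intro w
    induction w generalizing s with
    | nil => exact ⟨[], rfl⟩
    | cons z w ih =>
      obtain ⟨z', hz⟩ := KTrans_surj k p x y s z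
      obtain ⟨v, hv⟩ := ih (KTrans k p x y s z').2
      exact ⟨z' :: v, by simp [stateAct, hz, hv]⟩

theorem stateAct_id (k p : ℕ) (x y : ℕ → ℤ) (v : List ℤ) :
    stateAct k p x y .id v = v := by
  induction v with
  | nil => rfl
  | cons z v ih => simp [stateAct, KTrans, ih]

/-- Orbit relation. -/
def KRel (k p : ℕ) (x y : ℕ → ℤ) (v w : List ℤ) : Prop := ∃ g ∈ Kgroup k p x y, g v = w

theorem KRel.refl (k p : ℕ) (x y : ℕ → ℤ) (v : List ℤ) : KRel k p x y v v :=
  ⟨1, one_mem _, rfl⟩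

theorem KRel.symm {k p : ℕ} {x y : ℕ → ℤ} {v w : List ℤ} (h : KRel k p x y v w) :
    KRel k p x y w v := by
  obtain ⟨g, hg, rfl⟩ := h
  exact ⟨g⁻¹, inv_mem hg, by simp⟩

theorem KRel.trans {k p : ℕ} {x y : ℕ → ℤ} {u v w : List ℤ} (h : KRel k p x y u v)
    (h' : KRel k p x y v w) : KRel k p x y u w := by
  obtain ⟨g, hg, rfl⟩ := h
  obtain ⟨g', hg', rfl⟩ := h'
  exact ⟨g' * g, mul_mem hg' hg, by simp⟩

theorem KRel.gen {k p : ℕ} {x y : ℕ → ℤ} {s : KState} (hs : IsGen k p s) (v : List ℤ) :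
    KRel k p x y v (stateAct k p x y s v) :=
  ⟨Equiv.ofBijective _ (stateAct_bij k p x y s), Subgroup.subset_closure ⟨s, hs, rfl⟩, rfl⟩

theorem KRel.head {k p : ℕ} {x y : ℕ → ℤ} (hk : 1 ≤ k) (z z' : ℤ) (v : List ℤ) :
    KRel k p x y (z :: v) (z' :: v) := by
  have step : ∀ z : ℤ, KRel k p x y (z :: v) ((z + 1) :: v) := by
    intro z
    have := KRel.gen (x := x) (y := y) (p := p) (s := .a 0) (Or.inl ⟨0, hk, rfl⟩) (z :: v)
    simpa [stateAct, KTrans, stateAct_id] using this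
  have up : ∀ (n : ℕ) (z : ℤ), KRel k p x y (z :: v) ((z + n) :: v) := by
    intro n z
    induction n with
    | zero => simpa using KRel.refl k p x y (z :: v)
    | succ n ih =>
      have := ih.trans (step _)
      simpa [add_assoc] using this
  rcases le_total z z' with h | h
  · have := up (z' - z).toNat z
    rwa [show z + ((z' - z).toNat : ℤ) = z' by omega] at this
  · have := up (z - z').toNat z'
    rw [show z' + ((z - z').toNat : ℤ) = z by omega] at this
    exact this.symm

theorem exists_restr (k p : ℕ) (hk : 1 ≤ k) (hp : 1 ≤ p) (x y : ℕ → ℤ)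
    (hxy : x (k - 1) ≠ y (p - 1)) (s : KState) (hs : IsGen k p s) :
    ∃ t z, IsGen k p t ∧ KTrans k p x y t z = (z, s) := by
  rcases hs with ⟨i, hi, rfl⟩ | ⟨i, hi, rfl⟩
  · by_cases h : i + 1 < k
    · exact ⟨.a (i+1), x i, Or.inl ⟨_, h, rfl⟩, by simp [KTrans]⟩
    · obtain rfl : i = k - 1 := by omega
      exact ⟨.b 0, x (k-1), Or.inr ⟨_, hp, rfl⟩, by simp [KTrans]⟩
  · by_cases h : i + 1 < p
    · exact ⟨.b (i+1), y i, Or.inr ⟨_, h, rfl⟩, by simp [KTrans]⟩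
    · obtain rfl : i = p - 1 := by omega
      exact ⟨.b 0, y (p-1), Or.inr ⟨_, hp, rfl⟩, by simp [KTrans, hxy.symm]⟩

theorem KRel.cons {k p : ℕ} (hk : 1 ≤ k) (hp : 1 ≤ p) {x y : ℕ → ℤ}
    (hxy : x (k - 1) ≠ y (p - 1)) (g : Equiv.Perm (List ℤ)) (hg : g ∈ Kgroup k p x y) :
    ∀ (z : ℤ) (v : List ℤ), KRel k p x y (z :: v) (z :: g v) := by
  unfold Kgroup at hg
  induction hg using Subgroup.closure_induction with
  | mem g h =>
    intro z v
    obtain ⟨s, hs, hg⟩ := h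
    obtain ⟨t, c, ht, hc⟩ := exists_restr k p hk hp x y hxy s hs
    have h1 := KRel.gen (x := x) (y := y) ht (c :: v)
    simp only [stateAct, hc] at h1
    rw [hg]
    exact (KRel.head hk z c v).trans (h1.trans (KRel.head hk c z _))
  | one => intro z v; exact KRel.refl _ _ _ _ _
  | mul g g' _ _ h h' => intro z v; exact (h' z v).trans (h z (g' v))
  | inv g _ h =>
    intro z v
    have := (h z (g⁻¹ v)).symm
    simpa using this

theorem stmt7 (k p : ℕ) (hk : 1 ≤ k) (hp : 1 ≤ p) (x y : ℕ → ℤ)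
    (hxy : x (k - 1) ≠ y (p - 1)) :
    ∀ (m : ℕ) (v w : List ℤ), v.length = m → w.length = m →
      ∃ g ∈ Kgroup k p x y, g v = w := by
  intro m
  induction m with
  | zero =>
    intro v w hv hw
    rw [List.length_eq_zero_iff] at hv hw
    subst hv hw
    exact KRel.refl _ _ _ _ _
  | succ m ih =>
    intro v w hv hw
    rcases v with _ | ⟨z, v⟩
    · simp at hv
    rcases w with _ | ⟨z', w⟩
    · simp at hw
    obtain ⟨g, hg, hgv⟩ := ih v w (by simpa using hv) (by simpa using hw)
    have h1 := KRel.cons hk hp hxy g hg z v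
    rw [hgv] at h1
    exact h1.trans (KRel.head hk z z' w)
end

section
/- Let K' = [K,K] be the derived subgroup of the kneading group K. Then every element of K' fixes every length-one word (the first level of the tree ℤ*), and for every finitely supported family (g_z)_{z∈ℤ} of elements of K' (i.e. g_z = Id for all but finitely many z), the tree automorphism h defined by h(zv) = z·g_z(v) for all z ∈ ℤ and v ∈ ℤ* belongs to K'. -/
namespace Knead

open Equiv
open scoped commutatorElement

/-- The level-one-fixing automorphism with sections `f z`. -/
def dFun (f : ℤ → Perm (List ℤ)) : List ℤ → List ℤ
  | [] => []
  | z :: v => z :: f z v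

def D : (ℤ → Perm (List ℤ)) →* Perm (List ℤ) where
  toFun f :=
    { toFun := dFun f
      invFun := dFun f⁻¹
      left_inv := by rintro (_ | ⟨z, v⟩) <;> simp [dFun]
      right_inv := by rintro (_ | ⟨z, v⟩) <;> simp [dFun] }
  map_one' := by ext1 v; cases v <;> simp [dFun]
  map_mul' f g := by ext1 v; cases v <;> simp [dFun]

@[simp] lemma D_nil (f : ℤ → Perm (List ℤ)) : D f [] = [] := rfl
@[simp] lemma D_cons (f : ℤ → Perm (List ℤ)) (z : ℤ) (v : List ℤ) :
    D f (z :: v) = z :: f z v := rfl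

def tFun (n : ℤ) : List ℤ → List ℤ
  | [] => []
  | z :: v => (z + n) :: v

def T (n : ℤ) : Perm (List ℤ) where
  toFun := tFun n
  invFun := tFun (-n)
  left_inv := by rintro (_ | ⟨z, v⟩) <;> simp [tFun]
  right_inv := by rintro (_ | ⟨z, v⟩) <;> simp [tFun]

@[simp] lemma T_nil (n : ℤ) : T n [] = [] := rfl
@[simp] lemma T_cons (n z : ℤ) (v : List ℤ) : T n (z :: v) = (z + n) :: v := rfl

lemma T_mul (m n : ℤ) : T m * T n = T (n + m) := by
  ext1 v; cases v <;> simp [add_assoc]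

lemma T_zero : T 0 = 1 := by
  ext1 v; cases v <;> simp

lemma T_inv (n : ℤ) : (T n)⁻¹ = T (-n) := by
  rw [inv_eq_iff_mul_eq_one, T_mul]; simp [T_zero]

lemma T_conj (n : ℤ) (f : ℤ → Perm (List ℤ)) :
    T n * D f * (T n)⁻¹ = D (fun z => f (z - n)) := by
  rw [T_inv]
  ext1 v; cases v <;> simp [sub_eq_add_neg]

lemma T_mem {K : Subgroup (Perm (List ℤ))} (h : T 1 ∈ K) (n : ℤ) : T n ∈ K := by
  induction n using Int.induction_on with
  | zero => rw [T_zero]; exact K.one_mem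
  | succ i ih => rw [add_comm, ← T_mul]; exact K.mul_mem ih h
  | pred i ih =>
    rw [sub_eq_add_neg, ← T_mul, ← T_inv]; exact K.mul_mem (K.inv_mem h) ih

variable (k p : ℕ) (x y : ℕ → ℤ)

lemma act_inj (s : KState) (v w : List ℤ)
    (h : stateAct k p x y s v = stateAct k p x y s w) : v = w := by
  induction v generalizing s w with
  | nil => cases w <;> simp_all [stateAct]
  | cons z v ih =>
    cases w with
    | nil => simp [stateAct] at h
    | cons z' w =>
      simp only [stateAct, List.cons.injEq] at h
      have hz : z = z' := by
        have h1 := h.1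
        rcases s with (_ | i) | (_ | i) | _ <;> simp only [KTrans] at h1 <;> grind
      subst hz
      rw [ih _ _ h.2]

lemma act_surj (s : KState) (w : List ℤ) : ∃ v, stateAct k p x y s v = w := by
  induction w generalizing s with
  | nil => exact ⟨[], by simp [stateAct]⟩
  | cons z w ih =>
    have hz : ∃ z', (KTrans k p x y s z').1 = z := by
      rcases s with (_ | i) | (_ | i) | _
      · exact ⟨z - 1, by simp [KTrans]⟩
      all_goals exact ⟨z, by grind [KTrans]⟩
    obtain ⟨z', hz'⟩ := hz
    obtain ⟨v, hv⟩ := ih (KTrans k p x y s z').2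
    exact ⟨z' :: v, by simp [stateAct, hz', hv]⟩

noncomputable def P (s : KState) : Perm (List ℤ) :=
  Equiv.ofBijective (stateAct k p x y s)
    ⟨fun v w h => act_inj k p x y s v w h, fun w => act_surj k p x y s w⟩

lemma P_apply (s : KState) (v : List ℤ) : P k p x y s v = stateAct k p x y s v := rfl

lemma act_id (v : List ℤ) : stateAct k p x y .id v = v := by
  induction v with
  | nil => rfl
  | cons z v ih => simp [stateAct, KTrans, ih]

lemma P_id : P k p x y .id = 1 := by
  ext1 v; simp [P_apply, act_id]

lemma P_a0 : P k p x y (.a 0) = T 1 := by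
  ext1 v; cases v <;> simp [P_apply, stateAct, KTrans, act_id]

/-- Any state other than `a 0` is level-one fixing. -/
lemma P_eq_D (s : KState) (hs : s ≠ .a 0) :
    P k p x y s = D (fun z => P k p x y (KTrans k p x y s z).2) := by
  ext1 v
  rcases v with _ | ⟨z, v⟩
  · simp [P_apply, stateAct]
  · have : (KTrans k p x y s z).1 = z := by
      rcases s with (_ | i) | (_ | i) | _ <;> simp only [KTrans] <;> grind
    simp [P_apply, stateAct, this]

lemma P_mem {s : KState} (hs : IsGen k p s) : P k p x y s ∈ Kgroup k p x y :=
  Subgroup.subset_closure ⟨s, hs, rfl⟩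

variable {k p x y}

/-- Lift of a non-`a 0` generator to a section to coordinate 0. -/
lemma lift_aux (hk : 1 ≤ k) {s : KState} (hs : IsGen k p s) (hs0 : s ≠ .a 0) (n : ℤ) :
    D (fun z => P k p x y (KTrans k p x y s (z + n)).2) ∈ Kgroup k p x y := by
  have hT : T 1 ∈ Kgroup k p x y := by
    rw [← P_a0 k p x y]; exact P_mem k p x y (Or.inl ⟨0, hk, rfl⟩)
  have h := T_conj (-n) (fun z => P k p x y (KTrans k p x y s z).2)
  rw [← P_eq_D k p x y s hs0] at h
  simp only [sub_neg_eq_add] at h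
  rw [← h]
  exact mul_mem (mul_mem (T_mem hT _) (P_mem k p x y hs)) (inv_mem (T_mem hT _))

lemma lift (hk : 1 ≤ k) (hp : 1 ≤ p) (hxy : x (k - 1) ≠ y (p - 1)) {s : KState}
    (hs : IsGen k p s) :
    ∃ f : ℤ → Perm (List ℤ), D f ∈ Kgroup k p x y ∧ f 0 = P k p x y s ∧
      ∀ z ≠ 0, f z ≠ 1 → (s = .a (k-1) ∧ z = y (p-1) - x (k-1)) ∨
        (s = .b (p-1) ∧ z = x (k-1) - y (p-1)) := by
  have hb : IsGen k p (.b 0) := Or.inr ⟨0, hp, rfl⟩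
  rcases hs with ⟨i, hi, rfl⟩ | ⟨i, hi, rfl⟩
  · by_cases h : i + 1 < k
    · refine ⟨_, lift_aux hk (s := .a (i+1)) (Or.inl ⟨_, h, rfl⟩) (by simp) (x i), ?_, ?_⟩
      · simp [KTrans]
      · intro z hz h1
        simp [KTrans, hz, P_id] at h1
    · obtain rfl : i = k - 1 := by omega
      refine ⟨_, lift_aux hk hb (by simp) (x (k-1)), ?_, ?_⟩
      · simp [KTrans]
      · intro z hz h1
        by_cases h2 : z + x (k-1) = y (p-1)
        · left; exact ⟨rfl, by omega⟩
        · simp [KTrans, hz, h2, P_id] at h1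
  · by_cases h : i + 1 < p
    · refine ⟨_, lift_aux hk (s := .b (i+1)) (Or.inr ⟨_, h, rfl⟩) (by simp) (y i), ?_, ?_⟩
      · simp [KTrans]
      · intro z hz h1
        simp [KTrans, hz, P_id] at h1
    · obtain rfl : i = p - 1 := by omega
      refine ⟨_, lift_aux hk hb (by simp) (y (p-1)), ?_, ?_⟩
      · simp [KTrans, hxy.symm]
      · intro z hz h1
        by_cases h2 : z + y (p-1) = x (k-1)
        · right; exact ⟨rfl, by omega⟩
        · simp [KTrans, hz, h2, P_id] at h1

lemma gen_eq {g : Perm (List ℤ)} (hg : g ∈ SGens k p x y) :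
    ∃ s, IsGen k p s ∧ g = P k p x y s := by
  obtain ⟨s, hs, h⟩ := hg
  exact ⟨s, hs, by ext1 v; rw [h, P_apply]⟩

lemma lift_all (hk : 1 ≤ k) (hp : 1 ≤ p) (hxy : x (k - 1) ≠ y (p - 1))
    {g : Perm (List ℤ)} (hg : g ∈ Kgroup k p x y) :
    ∃ f : ℤ → Perm (List ℤ), D f ∈ Kgroup k p x y ∧ f 0 = g := by
  unfold Kgroup at hg
  induction hg using Subgroup.closure_induction with
  | mem g hg =>
    obtain ⟨s, hs, rfl⟩ := gen_eq hg
    obtain ⟨f, h1, h2, -⟩ := lift hk hp hxy hs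
    exact ⟨f, h1, h2⟩
  | one => exact ⟨1, by rw [map_one]; exact one_mem _, rfl⟩
  | mul g h _ _ ihg ihh =>
    obtain ⟨f, h1, rfl⟩ := ihg
    obtain ⟨f', h2, rfl⟩ := ihh
    exact ⟨f * f', by rw [map_mul]; exact mul_mem h1 h2, rfl⟩
  | inv g _ ih =>
    obtain ⟨f, h1, rfl⟩ := ih
    exact ⟨f⁻¹, by rw [map_inv]; exact inv_mem h1, rfl⟩

lemma comm_conj {G : Type*} [Group G] {K : Subgroup G} {g h : G} (hg : g ∈ K)
    (hh : h ∈ ⁅K, K⁆) : g * h * g⁻¹ ∈ ⁅K, K⁆ := by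
  have hK : h ∈ K := by
    have : ⁅K, K⁆ ≤ K := Subgroup.commutator_le.2 fun a ha b hb => by
      rw [commutatorElement_def]
      exact mul_mem (mul_mem (mul_mem ha hb) (inv_mem ha)) (inv_mem hb)
    exact this hh
  have : g * h * g⁻¹ = ⁅g, h⁆ * h := by rw [commutatorElement_def]; group
  rw [this]
  exact mul_mem (Subgroup.commutator_mem_commutator hg hK) hh

lemma comm_closure_le {G : Type*} [Group G] {S : Set G} {H : Subgroup G}
    (hn : ∀ g ∈ Subgroup.closure S, ∀ h ∈ H, g * h * g⁻¹ ∈ H)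
    (hS : ∀ s ∈ S, ∀ t ∈ S, ⁅s, t⁆ ∈ H) :
    ⁅Subgroup.closure S, Subgroup.closure S⁆ ≤ H := by
  have key : ∀ t ∈ Subgroup.closure S, (∀ s ∈ S, ⁅s, t⁆ ∈ H) →
      ∀ g ∈ Subgroup.closure S, ⁅g, t⁆ ∈ H := by
    intro t _ hst g hg
    induction hg using Subgroup.closure_induction with
    | mem g hg => exact hst g hg
    | one => simp
    | mul a b ha _ iha ihb =>
      have : ⁅a * b, t⁆ = a * ⁅b, t⁆ * a⁻¹ * ⁅a, t⁆ := by
        simp only [commutatorElement_def]; group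
      rw [this]; exact mul_mem (hn a ha _ ihb) iha
    | inv a ha ih =>
      have : ⁅a⁻¹, t⁆ = a⁻¹ * ⁅a, t⁆⁻¹ * (a⁻¹)⁻¹ := by
        simp only [commutatorElement_def]; group
      rw [this]; exact hn _ (inv_mem ha) _ (inv_mem ih)
  refine Subgroup.commutator_le.2 fun g hg t ht => key t ht (fun s hs => ?_) g hg
  rw [← commutatorElement_inv]
  exact inv_mem (key s (Subgroup.subset_closure hs)
    (fun r hr => hS r hr s hs) t ht)

lemma single_zero (hk : 1 ≤ k) (hp : 1 ≤ p) (hxy : x (k - 1) ≠ y (p - 1))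
    {g : Perm (List ℤ)} (hg : g ∈ ⁅Kgroup k p x y, Kgroup k p x y⁆) :
    D (Pi.mulSingle 0 g) ∈ ⁅Kgroup k p x y, Kgroup k p x y⁆ := by
  let φ : Perm (List ℤ) →* Perm (List ℤ) :=
    D.comp (MonoidHom.mulSingle (fun _ : ℤ => Perm (List ℤ)) 0)
  suffices h : ⁅Kgroup k p x y, Kgroup k p x y⁆ ≤
      (⁅Kgroup k p x y, Kgroup k p x y⁆).comap φ from h hg
  refine comm_closure_le ?_ ?_
  · intro g hg h hh
    obtain ⟨f, hf, rfl⟩ := lift_all hk hp hxy hg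
    have h2 := comm_conj hf (show D (Pi.mulSingle 0 h) ∈ ⁅Kgroup k p x y, Kgroup k p x y⁆ from hh)
    change D (Pi.mulSingle 0 _) ∈ ⁅Kgroup k p x y, Kgroup k p x y⁆
    convert h2 using 1
    rw [← map_mul, ← map_inv, ← map_mul]
    congr 1
    funext z
    by_cases hz : z = 0
    · subst hz; simp
    · simp [hz]
  · intro g hg h hh
    obtain ⟨s, hs, rfl⟩ := gen_eq hg
    obtain ⟨t, ht, rfl⟩ := gen_eq hh
    change D (Pi.mulSingle 0 _) ∈ ⁅Kgroup k p x y, Kgroup k p x y⁆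
    by_cases hst : s = t
    · subst hst
      simp
    obtain ⟨f, hf, hf0, hf1⟩ := lift hk hp hxy hs
    obtain ⟨f', hf', hf0', hf1'⟩ := lift hk hp hxy ht
    have : Pi.mulSingle 0 ⁅P k p x y s, P k p x y t⁆ = ⁅f, f'⁆ := by
      funext z
      by_cases hz : z = 0
      · subst hz; simp [commutatorElement_def, hf0, hf0']
      · have h3 : f z = 1 ∨ f' z = 1 := by
          by_contra! hc
          have e1 := hf1 z hz hc.1
          have e2 := hf1' z hz hc.2
          rcases e1 with ⟨e1, e1'⟩ | ⟨e1, e1'⟩ <;> rcases e2 with ⟨e2, e2'⟩ | ⟨e2, e2'⟩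
          · exact hst (e1.trans e2.symm)
          · omega
          · omega
          · exact hst (e1.trans e2.symm)
        rcases h3 with h3 | h3 <;> simp [hz, commutatorElement_def, h3]
    rw [this, map_commutatorElement]
    exact Subgroup.commutator_mem_commutator hf hf'

lemma single_all (hk : 1 ≤ k) (hp : 1 ≤ p) (hxy : x (k - 1) ≠ y (p - 1))
    {g : Perm (List ℤ)} (hg : g ∈ ⁅Kgroup k p x y, Kgroup k p x y⁆) (n : ℤ) :
    D (Pi.mulSingle n g) ∈ ⁅Kgroup k p x y, Kgroup k p x y⁆ := by
  have hT : T 1 ∈ Kgroup k p x y := by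
    rw [← P_a0 k p x y]; exact P_mem k p x y (Or.inl ⟨0, hk, rfl⟩)
  have h := comm_conj (T_mem hT n) (single_zero hk hp hxy hg)
  rw [T_conj] at h
  convert h using 2
  funext z
  simp [Pi.mulSingle_apply, sub_eq_zero]

lemma D_mem (hk : 1 ≤ k) (hp : 1 ≤ p) (hxy : x (k - 1) ≠ y (p - 1)) (A : Finset ℤ)
    (g : ℤ → Perm (List ℤ)) (hg : ∀ z, g z ∈ ⁅Kgroup k p x y, Kgroup k p x y⁆)
    (hA : ∀ z ∉ A, g z = 1) : D g ∈ ⁅Kgroup k p x y, Kgroup k p x y⁆ := by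
  induction A using Finset.induction_on generalizing g with
  | empty =>
    have : g = 1 := by funext z; exact hA z (by simp)
    rw [this, map_one]; exact one_mem _
  | insert a A _ ih =>
    have : g = Pi.mulSingle a (g a) * Function.update g a 1 := by
      funext z
      by_cases hz : z = a
      · subst hz; simp
      · simp [hz]
    rw [this, map_mul]
    refine mul_mem (single_all hk hp hxy (hg a) a) (ih _ ?_ ?_)
    · intro z
      by_cases hz : z = a
      · subst hz; simp
      · simp [hz, hg z]
    · intro z hzA
      by_cases hz : z = a
      · subst hz; simp
      · simp [hz, hA z (by simp [hz, hzA])]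

lemma level_one {g : Perm (List ℤ)} (hg : g ∈ Kgroup k p x y) :
    ∃ n : ℤ, ∀ z : ℤ, g [z] = [z + n] := by
  unfold Kgroup at hg
  induction hg using Subgroup.closure_induction with
  | mem g hg =>
    obtain ⟨s, hs, rfl⟩ := gen_eq hg
    by_cases h : s = .a 0
    · subst h; exact ⟨1, fun z => by rw [P_a0]; simp⟩
    · refine ⟨0, fun z => ?_⟩
      rw [P_eq_D k p x y s h]
      simp [P_apply, stateAct]
  | one => exact ⟨0, by simp⟩
  | mul g h _ _ ihg ihh =>
    obtain ⟨m, hm⟩ := ihg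
    obtain ⟨n, hn⟩ := ihh
    exact ⟨n + m, fun z => by simp [hm, hn, add_assoc]⟩
  | inv g _ ih =>
    obtain ⟨m, hm⟩ := ih
    exact ⟨-m, fun z => by rw [Perm.inv_eq_iff_eq, hm]; simp⟩

lemma level_one_comm {h : Perm (List ℤ)} (hh : h ∈ ⁅Kgroup k p x y, Kgroup k p x y⁆) (z : ℤ) :
    h [z] = [z] := by
  suffices H : ⁅Kgroup k p x y, Kgroup k p x y⁆ ≤
      MulAction.stabilizer (Perm (List ℤ)) [z] from H hh
  refine Subgroup.commutator_le.2 fun a ha b hb => ?_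
  obtain ⟨m, hm⟩ := level_one ha
  obtain ⟨n, hn⟩ := level_one hb
  have hm' : a⁻¹ [z - n] = [z - n - m] := by rw [Perm.inv_eq_iff_eq, hm]; simp
  have hn' : b⁻¹ [z] = [z - n] := by rw [Perm.inv_eq_iff_eq, hn]; simp
  rw [MulAction.mem_stabilizer_iff, commutatorElement_def]
  simp only [Perm.smul_def, Perm.mul_apply, hn', hm', hn, hm]
  congr 1; ring

end Knead

theorem stmt9 (k p : ℕ) (hk : 1 ≤ k) (hp : 1 ≤ p) (x y : ℕ → ℤ)
    (hxy : x (k - 1) ≠ y (p - 1)) :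
    (∀ h ∈ ⁅Kgroup k p x y, Kgroup k p x y⁆, ∀ z : ℤ, h [z] = [z]) ∧
    (∀ g : ℤ → Equiv.Perm (List ℤ),
      (∀ z : ℤ, g z ∈ ⁅Kgroup k p x y, Kgroup k p x y⁆) →
      {z : ℤ | g z ≠ 1}.Finite →
      ∀ h : Equiv.Perm (List ℤ),
        (∀ (z : ℤ) (v : List ℤ), h (z :: v) = z :: g z v) →
        h ∈ ⁅Kgroup k p x y, Kgroup k p x y⁆) := by
  refine ⟨fun h hh z => Knead.level_one_comm hh z, fun g hg hfin h hh => ?_⟩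
  have hnil : h [] = [] := by
    rcases e : h [] with _ | ⟨z, v⟩
    · rfl
    · have h1 : h (z :: (g z)⁻¹ v) = h [] := by rw [hh, e]; simp
      exact absurd (h.injective h1) (by simp)
  have : h = Knead.D g := by
    ext1 v
    rcases v with _ | ⟨z, v⟩
    · rw [hnil]; simp
    · rw [hh]; simp
  rw [this]
  exact Knead.D_mem hk hp hxy hfin.toFinset g hg (fun z hz => by simpa using hz)
end

section
/- The kneading group K is amenable: there exists a finitely additive probability measure μ defined on all subsets of K which is left-invariant, i.e. μ(gA) = μ(A) for every g ∈ K and every A ⊆ K. -/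
namespace KG

/-- Finitely supported probability, as a functional on all real functions. -/
structure FProb (Y : Type) where
  M : (Y → ℝ) →ₗ[ℝ] ℝ
  one : M (fun _ => 1) = 1
  nonneg : ∀ f, (∀ y, 0 ≤ f y) → 0 ≤ M f
  fin : ∃ Z : Finset Y, ∀ f, (∀ y ∈ Z, f y = 0) → M f = 0

namespace FProb
variable {Y Z : Type}

lemma mono (P : FProb Y) {f g : Y → ℝ} (h : ∀ y, f y ≤ g y) : P.M f ≤ P.M g := by
  have := P.nonneg (g - f) (fun y => by simpa using h y)
  rw [map_sub] at this
  linarith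

lemma const (P : FProb Y) (c : ℝ) : P.M (fun _ => c) = c := by
  have : (fun _ : Y => c) = c • (fun _ : Y => (1 : ℝ)) := by ext; simp
  rw [this, map_smul, P.one]; simp

lemma abs_le (P : FProb Y) {f : Y → ℝ} {c : ℝ} (h : ∀ y, |f y| ≤ c) : |P.M f| ≤ c := by
  rw [_root_.abs_le]
  constructor
  · rw [← P.const (-c)]
    exact P.mono fun y => (_root_.abs_le.1 (h y)).1
  · rw [← P.const c]
    exact P.mono fun y => (_root_.abs_le.1 (h y)).2

/-- pushforward -/
def map (P : FProb Y) (h : Y → Z) : FProb Z where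
  M := P.M ∘ₗ LinearMap.funLeft ℝ ℝ h
  one := by simpa [LinearMap.funLeft, Function.comp_def] using P.one
  nonneg f hf := P.nonneg _ fun y => hf (h y)
  fin := by
    classical
    obtain ⟨S, hS⟩ := P.fin
    exact ⟨S.image h, fun f hf => hS _ fun y hy => hf _ (Finset.mem_image_of_mem _ hy)⟩

lemma map_M (P : FProb Y) (h : Y → Z) (f : Z → ℝ) : (P.map h).M f = P.M (fun y => f (h y)) := rfl

/-- mixture -/
def bind (P : FProb Y) (q : Y → FProb Z) : FProb Z where
  M := P.M ∘ₗ LinearMap.pi fun y => (q y).M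
  one := by
    simp only [LinearMap.comp_apply]
    convert P.one using 2
    ext y
    simp [(q y).one]
  nonneg f hf := P.nonneg _ fun y => (q y).nonneg f hf
  fin := by
    classical
    obtain ⟨S, hS⟩ := P.fin
    choose U hU using fun y => (q y).fin
    exact ⟨S.biUnion U, fun f hf => hS _ fun y hy => hU y _ fun z hz =>
      hf z (Finset.mem_biUnion.2 ⟨y, hy, hz⟩)⟩

lemma bind_M (P : FProb Y) (q : Y → FProb Z) (f : Z → ℝ) :
    (P.bind q).M f = P.M (fun y => (q y).M f) := rfl

lemma congr_on (P : FProb Y) {S : Finset Y} (hS : ∀ f, (∀ y ∈ S, f y = 0) → P.M f = 0)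
    {f g : Y → ℝ} (h : ∀ y ∈ S, f y = g y) : P.M f = P.M g := by
  have := hS (f - g) (fun y hy => by simp [h y hy])
  rw [map_sub] at this
  linarith

lemma close_on (P : FProb Y) {S : Finset Y} (hS : ∀ f, (∀ y ∈ S, f y = 0) → P.M f = 0)
    {f g : Y → ℝ} {c : ℝ} (hc : 0 ≤ c) (h : ∀ y ∈ S, |f y - g y| ≤ c) : |P.M f - P.M g| ≤ c := by
  classical
  rw [← map_sub, P.congr_on hS (g := fun y => if y ∈ S then f y - g y else 0)
    (fun y hy => by simp [hy])]
  apply P.abs_le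
  intro y
  split_ifs with hy
  · exact h y hy
  · simpa using hc

/-- point mass -/
def dirac (y : Y) : FProb Y where
  M := LinearMap.proj y
  one := rfl
  nonneg f hf := hf y
  fin := ⟨{y}, fun f hf => hf y (by simp)⟩

/-- weighted finite family -/
def wsum {ι : Type} (S : Finset ι) (w : ι → ℝ) (e : ι → Y) (h0 : ∀ i ∈ S, 0 ≤ w i)
    (h1 : ∑ i ∈ S, w i = 1) : FProb Y where
  M := ∑ i ∈ S, w i • LinearMap.proj (e i)
  one := by simpa using h1
  nonneg f hf := by
    simp only [LinearMap.coe_sum, Finset.sum_apply, LinearMap.smul_apply, LinearMap.proj_apply,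
      smul_eq_mul]
    exact Finset.sum_nonneg fun i hi => mul_nonneg (h0 i hi) (hf _)
  fin := by
    classical
    refine ⟨S.image e, fun f hf => ?_⟩
    simp only [LinearMap.coe_sum, Finset.sum_apply, LinearMap.smul_apply, LinearMap.proj_apply,
      smul_eq_mul]
    exact Finset.sum_eq_zero fun i hi => by rw [hf _ (Finset.mem_image_of_mem _ hi), mul_zero]

lemma wsum_M {ι : Type} (S : Finset ι) (w : ι → ℝ) (e : ι → Y) (h0 : ∀ i ∈ S, 0 ≤ w i)
    (h1 : ∑ i ∈ S, w i = 1) (f : Y → ℝ) : (wsum S w e h0 h1).M f = ∑ i ∈ S, w i * f (e i) := by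
  simp [wsum]

/-- almost invariance -/
def AI (P : FProb Y) (u : Y → Y) (ε : ℝ) : Prop :=
  ∀ f : Y → ℝ, (∀ y, |f y| ≤ 1) → |P.M (fun y => f (u y)) - P.M f| ≤ ε

lemma AI.comp {P : FProb Y} {u v : Y → Y} {ε δ : ℝ} (hu : P.AI u ε) (hv : P.AI v δ) :
    P.AI (fun y => u (v y)) (δ + ε) := by
  intro f hf
  have h1 := hv (fun y => f (u y)) (fun y => hf _)
  have h2 := hu f hf
  have := abs_add_le (P.M (fun y => f (u (v y))) - P.M (fun y => f (u y)))
    (P.M (fun y => f (u y)) - P.M f)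
  rw [sub_add_sub_cancel] at this
  linarith

lemma AI.symm {P : FProb Y} {u v : Y → Y} {ε : ℝ} (hu : P.AI u ε) (h : ∀ y, v (u y) = y) :
    P.AI v ε := by
  intro f hf
  have h1 := hu (fun y => f (v y)) (fun y => hf _)
  simp only [h] at h1
  rwa [abs_sub_comm]

lemma AI.mono {P : FProb Y} {u : Y → Y} {ε δ : ℝ} (hu : P.AI u ε) (h : ε ≤ δ) : P.AI u δ :=
  fun f hf => (hu f hf).trans h

lemma AI.id (P : FProb Y) : P.AI (fun y => y) 0 := fun f _ => by simp

end FProb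

variable {W : Type} [Group W] {Y : Type}

/-- Amenability of the action of the subgroup `H` on `Y`. -/
def Am (H : Subgroup W) (ρ : W →* Equiv.Perm Y) : Prop :=
  ∀ T : Finset W, (∀ g ∈ T, g ∈ H) → ∀ ε : ℝ, 0 < ε → ∃ P : FProb Y, ∀ g ∈ T, P.AI (ρ g) ε

/-- left translation -/
def lam (W : Type) [Group W] : W →* Equiv.Perm W := MulAction.toPermHom W W

@[simp] lemma lam_apply (g w : W) : lam W g w = g * w := rfl

lemma Am.of_gens (ρ : W →* Equiv.Perm Y) (S : Set W)
    (h : ∀ ε : ℝ, 0 < ε → ∃ P : FProb Y, ∀ g ∈ S, P.AI (ρ g) ε) :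
    Am (Subgroup.closure S) ρ := by
  have key : ∀ g ∈ Subgroup.closure S, ∃ n : ℕ, ∀ (P : FProb Y) (ε : ℝ),
      (∀ s ∈ S, P.AI (ρ s) ε) → P.AI (ρ g) (n * ε) := by
    intro g hg
    induction hg using Subgroup.closure_induction with
    | mem s hs => exact ⟨1, fun P ε h => by simpa using h s hs⟩
    | one => exact ⟨0, fun P ε h => by
        intro f hf
        simp⟩
    | mul a b _ _ ha hb =>
      obtain ⟨n, hn⟩ := ha
      obtain ⟨m, hm⟩ := hb
      refine ⟨m + n, fun P ε h => ?_⟩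
      have := (hn P ε h).comp (hm P ε h)
      rw [map_mul]
      push_cast
      rw [add_mul]
      exact this
    | inv a _ ha =>
      obtain ⟨n, hn⟩ := ha
      exact ⟨n, fun P ε h => (hn P ε h).symm (fun y => by rw [map_inv]; simp)⟩
  intro T hT ε hε
  choose! n hn using key
  obtain ⟨P, hP⟩ := h (ε / (∑ g ∈ T, n g + 1 : ℕ)) (by positivity)
  refine ⟨P, fun g hg => (hn g (hT g hg) P _ hP).mono ?_⟩
  have h1 : n g ≤ ∑ g ∈ T, n g := Finset.single_le_sum (f := n) (fun _ _ => Nat.zero_le _) hg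
  have h2 : (n g : ℝ) ≤ (∑ g ∈ T, n g + 1 : ℕ) := by exact_mod_cast h1.trans (Nat.le_succ _)
  rw [mul_div_assoc', div_le_iff₀ (by positivity)]
  nlinarith

/-- Extension lemma. -/
lemma Am.ext (H : Subgroup W) (ρ : W →* Equiv.Perm Y) (h : Am H ρ)
    (hst : ∀ y : Y, ∃ N : Subgroup W, (∀ g ∈ H, ρ g y = y → g ∈ N) ∧ Am N (lam W)) :
    Am H (lam W) := by
  classical
  let r : Setoid Y :=
    { r := fun a b => ∃ g ∈ H, ρ g a = b
      iseqv := ⟨fun a => ⟨1, H.one_mem, by simp⟩,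
        fun {a b} ⟨g, hg, e⟩ => ⟨g⁻¹, H.inv_mem hg, by rw [← e, map_inv]; simp⟩,
        fun {a b c} ⟨g, hg, e⟩ ⟨g', hg', e'⟩ => ⟨g' * g, H.mul_mem hg' hg, by simp [e, e']⟩⟩ }
  let rep : Y → Y := fun y => (Quotient.mk r y).out
  have hrep : ∀ y, ∃ g ∈ H, ρ g (rep y) = y := fun y => Quotient.mk_out (s := r) y
  have hrep2 : ∀ g ∈ H, ∀ y, rep (ρ g y) = rep y := by
    intro g hg y
    have : Quotient.mk r y = Quotient.mk r (ρ g y) := Quotient.sound ⟨g, hg, rfl⟩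
    simp only [rep, this]
  choose σ hσH hσ using hrep
  intro T hT ε hε
  obtain ⟨P, hP⟩ := h T hT (ε / 2) (by positivity)
  obtain ⟨Z, hZ⟩ := P.fin
  let hh : Finset W := (T ×ˢ Z).image fun gy => (σ (ρ gy.1 gy.2))⁻¹ * gy.1 * σ gy.2
  have hq : ∀ y : Y, ∃ q : FProb W, ∀ g ∈ hh, g ∈ H → ρ g y = y → q.AI (lam W g) (ε / 2) := by
    intro y
    obtain ⟨N, hN, hA⟩ := hst y
    obtain ⟨q, hq⟩ := hA (hh.filter fun g => g ∈ N) (by simp) (ε / 2) (by positivity)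
    exact ⟨q, fun g hg hgH hy => hq g (by simp [hg, hN g hgH hy])⟩
  choose q hq using hq
  refine ⟨P.bind fun y => (q (rep y)).map fun w => σ y * w, fun g hg f hf => ?_⟩
  simp only [FProb.bind_M, FProb.map_M, lam_apply]
  let Θ : Y → ℝ := fun y => (q (rep y)).M fun w => f (σ y * w)
  have h1 := hP g hg Θ (fun y => (q (rep y)).abs_le fun w => hf _)
  have h2 : |P.M (fun y => (q (rep y)).M fun w => f (g * (σ y * w))) - P.M (fun y => Θ (ρ g y))|
      ≤ ε / 2 := by
    apply P.close_on hZ (by positivity)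
    intro y hy
    have hin : (σ (ρ g y))⁻¹ * g * σ y ∈ hh :=
      Finset.mem_image.2 ⟨(g, y), by simp [hg, hy], rfl⟩
    have h3 := hq (rep y) _ hin
      (H.mul_mem (H.mul_mem (H.inv_mem (hσH _)) (hT g hg)) (hσH _)) (by
        rw [map_mul, map_mul, map_inv, Equiv.Perm.mul_apply, Equiv.Perm.mul_apply, hσ,
          Equiv.Perm.inv_eq_iff_eq, ← hrep2 g (hT g hg) y, hσ]) (fun w => f (σ (ρ g y) * w))
      (fun w => hf _)
    simp only [lam_apply] at h3
    simp only [Θ, hrep2 g (hT g hg) y]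
    convert h3 using 6
    group
  have := abs_add_le (P.M (fun y => (q (rep y)).M fun w => f (g * (σ y * w))) -
    P.M (fun y => Θ (ρ g y))) (P.M (fun y => Θ (ρ g y)) - P.M Θ)
  rw [sub_add_sub_cancel] at this
  simp only [Θ] at *
  linarith

/-- averaging over powers of one element -/
lemma exists_avg (t : W) (n : ℕ) : ∃ P : FProb W, (P.AI (fun w => t * w) (2 / (n + 1))) ∧
    ∀ g : W, Commute g t → ∀ f : W → ℝ, P.M (fun w => f (g * w)) = P.M (fun w => f (w * g)) := by
  refine ⟨FProb.wsum (Finset.range (n + 1)) (fun _ => 1 / (n + 1 : ℝ)) (fun i => t ^ i)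
    (fun _ _ => by positivity) (by simp; field_simp), ?_, ?_⟩
  · intro f hf
    rw [FProb.wsum_M, FProb.wsum_M, ← Finset.mul_sum, ← Finset.mul_sum, ← mul_sub]
    have h1 := Finset.sum_range_succ' (fun i => f (t ^ i)) (n + 1)
    rw [Finset.sum_range_succ] at h1
    have h2 : ∑ i ∈ Finset.range (n + 1), f (t * t ^ i)
        = ∑ i ∈ Finset.range (n + 1), f (t ^ (i + 1)) :=
      Finset.sum_congr rfl fun i _ => by rw [pow_succ']
    rw [h2, abs_mul, abs_of_nonneg (by positivity)]
    have h3 : ∑ i ∈ Finset.range (n + 1), f (t ^ (i + 1)) - ∑ i ∈ Finset.range (n + 1), f (t ^ i)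
        = f (t ^ (n + 1)) - f (t ^ 0) := by linarith
    rw [h3]
    have h4 := hf (t ^ (n + 1))
    have h5 := hf (t ^ 0)
    have h6 := abs_sub (f (t ^ (n + 1))) (f (t ^ 0))
    rw [div_mul_eq_mul_div, one_mul]
    gcongr
    linarith
  · intro g hg f
    simp only [FProb.wsum_M]
    refine Finset.sum_congr rfl fun i _ => ?_
    rw [(hg.pow_right i).eq]

/-- abelian groups are amenable -/
lemma Am.abelian (H : Subgroup W) (hH : ∀ g ∈ H, ∀ h ∈ H, g * h = h * g) : Am H (lam W) := by
  classical
  intro T hT ε hε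
  induction T using Finset.induction_on with
  | empty => exact ⟨FProb.dirac 1, by simp⟩
  | insert t T _ ih =>
    obtain ⟨P, hP⟩ := ih (fun g hg => hT g (by simp [hg]))
    obtain ⟨n, hn⟩ := exists_nat_gt (2 / ε)
    obtain ⟨Q, hQ1, hQ2⟩ := exists_avg t n
    have htn : 2 / (n + 1 : ℝ) ≤ ε := by
      rw [div_le_iff₀ (by positivity)]
      rw [div_lt_iff₀ hε] at hn
      nlinarith
    refine ⟨Q.bind fun w => P.map fun v => w * v, ?_⟩
    intro g hg f hf
    simp only [FProb.bind_M, FProb.map_M, lam_apply]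
    rw [Finset.mem_insert] at hg
    rcases hg with rfl | hg
    · have := hQ1 (fun w => P.M fun v => f (w * v)) (fun w => P.abs_le fun v => hf _)
      simp only [mul_assoc] at this
      exact this.trans htn
    · have hc : Commute g t := hH g (hT g (by simp [hg])) t (hT t (by simp))
      have := hQ2 g hc (fun w => P.M fun v => f (w * v))
      simp only [mul_assoc] at this
      rw [this, ← map_sub]
      apply Q.abs_le
      intro w
      exact hP g hg (fun v => f (w * v)) (fun _ => hf _)

lemma Am.conj (H : Subgroup W) (hA : Am H (lam W)) (h : W) :
    Am (H.comap (MulAut.conj h).toMonoidHom) (lam W) := by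
  classical
  intro T hT ε hε
  obtain ⟨P, hP⟩ := hA (T.image fun g => h * g * h⁻¹) (by
    intro g hg
    obtain ⟨g', hg', rfl⟩ := Finset.mem_image.1 hg
    simpa using hT g' hg') ε hε
  refine ⟨P.map fun w => h⁻¹ * w, fun g hg f hf => ?_⟩
  have := hP _ (Finset.mem_image_of_mem _ hg) (fun w => f (h⁻¹ * w)) (fun _ => hf _)
  simp only [FProb.map_M, lam_apply] at *
  simpa [mul_assoc] using this

/-- The final passage to a finitely additive measure. -/
lemma Am.measure {G : Type} [Group G] (H : Subgroup W) (hA : Am H (lam W))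
    (θ : H →* G) (hθ : Function.Surjective θ) :
    ∃ μ : Set G → ℝ, μ Set.univ = 1 ∧ (∀ A, 0 ≤ μ A) ∧
      (∀ A B, Disjoint A B → μ (A ∪ B) = μ A + μ B) ∧
      (∀ (g : G) (A : Set G), μ ((fun a => g * a) '' A) = μ A) := by
  classical
  have hrep : ∀ w : W, w * ((Quotient.mk (QuotientGroup.rightRel H) w).out)⁻¹ ∈ H := by
    intro w
    have := Quotient.mk_out (s := QuotientGroup.rightRel H) w
    exact QuotientGroup.rightRel_apply.1 this
  let τ : W → G := fun w => θ ⟨_, hrep w⟩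
  have hτ : ∀ (h : H) (w : W), τ (h * w) = θ h * τ w := by
    intro h w
    have e : Quotient.mk (QuotientGroup.rightRel H) ((h : W) * w)
        = Quotient.mk (QuotientGroup.rightRel H) w := by
      apply Quotient.sound
      apply QuotientGroup.rightRel_apply.2
      simp [mul_assoc]
    simp only [τ]
    rw [← map_mul]
    congr 1
    ext
    simp [e, mul_assoc]
  have hP : ∀ i : Finset H × ℕ, ∃ P : FProb G, ∀ h ∈ i.1,
      P.AI (fun g => θ h * g) (1 / (i.2 + 1)) := by
    intro i
    obtain ⟨P, hP⟩ := hA (i.1.image (fun h : H => (h : W))) (by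
      intro g hg
      obtain ⟨g', hg', rfl⟩ := Finset.mem_image.1 hg
      exact g'.2) (1 / (i.2 + 1)) (by positivity)
    refine ⟨P.map τ, fun h hh f hf => ?_⟩
    have := hP h (Finset.mem_image_of_mem _ hh) (fun w => f (τ w)) (fun _ => hf _)
    simp only [lam_apply, hτ] at this
    exact this
  choose P hP using hP
  let U : Ultrafilter (Finset H × ℕ) := Ultrafilter.of Filter.atTop
  let ind : Set G → G → ℝ := fun A => A.indicator (fun _ => 1)
  have hind0 : ∀ A g, 0 ≤ ind A g := fun A g => Set.indicator_nonneg (fun _ _ => zero_le_one) g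
  have hind1 : ∀ A g, |ind A g| ≤ 1 := fun A g => by
    rw [abs_of_nonneg (hind0 A g)]
    exact Set.indicator_le_self' (fun _ _ => zero_le_one) g |>.trans (by simp)
  have hlim : ∀ A : Set G, ∃ c : ℝ, Filter.Tendsto (fun i => (P i).M (ind A)) U (nhds c) := by
    intro A
    have hmem : ∀ i, (P i).M (ind A) ∈ Set.Icc (-1 : ℝ) 1 := fun i =>
      abs_le.1 ((P i).abs_le (hind1 A))
    obtain ⟨c, -, hc⟩ := (isCompact_Icc (a := (-1 : ℝ)) (b := 1)).ultrafilter_le_nhds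
      (U.map fun i => (P i).M (ind A)) (by
        simp only [Filter.le_principal_iff]
        exact Filter.mem_map.2 (Filter.mem_of_superset Filter.univ_mem fun i _ => hmem i))
    exact ⟨c, hc⟩
  choose μ hμ using hlim
  refine ⟨μ, ?_, ?_, ?_, ?_⟩
  · refine tendsto_nhds_unique (hμ Set.univ) ?_
    have : ∀ i, (P i).M (ind Set.univ) = 1 := fun i => by
      have : ind Set.univ = fun _ => 1 := by simp [ind]
      rw [this, (P i).one]
    simp only [this]
    exact tendsto_const_nhds
  · intro A
    exact ge_of_tendsto' (hμ A) fun i => (P i).nonneg _ (hind0 A)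
  · intro A B hAB
    refine tendsto_nhds_unique (hμ _) ?_
    have := (hμ A).add (hμ B)
    refine this.congr fun i => ?_
    rw [← map_add]
    simp only [ind]
    rw [Set.indicator_union_of_disjoint hAB]
    rfl
  · intro g A
    obtain ⟨h, rfl⟩ := hθ g
    have h0 : Filter.Tendsto (fun i => (P i).M (ind ((fun a => θ h * a) '' A)) - (P i).M (ind A)) U
        (nhds 0) := by
      have hle : (U : Filter (Finset H × ℕ)) ≤ Filter.atTop := Ultrafilter.of_le _
      have h1 : Filter.Tendsto (fun i : Finset H × ℕ => (1 : ℝ) / (i.2 + 1)) U (nhds 0) := by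
        refine Filter.Tendsto.comp (g := fun n : ℕ => (1 : ℝ) / (n + 1))
          tendsto_one_div_add_atTop_nhds_zero_nat ?_
        refine Filter.Tendsto.mono_left ?_ hle
        rw [← Filter.prod_atTop_atTop_eq]
        exact Filter.tendsto_snd
      refine squeeze_zero_norm' ?_ h1
      have h2 : ∀ᶠ i : Finset H × ℕ in U, h ∈ i.1 := by
        apply hle
        filter_upwards [Filter.eventually_ge_atTop (({h} : Finset H), 0)] with i hi
        exact hi.1 (by simp)
      filter_upwards [h2] with i hi
      have := hP i h hi (ind ((fun a => θ h * a) '' A)) (hind1 _)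
      rw [Real.norm_eq_abs, abs_sub_comm]
      convert this using 4
      ext a
      simp only [ind, Set.indicator]
      congr 1
      simp
    have h1 := (hμ ((fun a => θ h * a) '' A)).sub (hμ A)
    have := tendsto_nhds_unique h1 h0
    linarith

end KG


namespace KG

/-- Portraits of automorphisms of the tree (vertices are reversed words). -/
@[ext] structure Por where
  f : List ℤ → ℤ

/-- action of a portrait on reversed words -/
def act (g : List ℤ → ℤ) : List ℤ → List ℤ
  | [] => []
  | z :: v => (z + g v) :: act g v

/-- inverse action -/
def ainv (g : List ℤ → ℤ) : List ℤ → List ℤ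
  | [] => []
  | z :: v => (z - g (ainv g v)) :: ainv g v

@[simp] lemma act_nil (g) : act g [] = [] := rfl
@[simp] lemma act_cons (g z v) : act g (z :: v) = (z + g v) :: act g v := rfl

@[simp] lemma act_length (g v) : (act g v).length = v.length := by
  induction v <;> simp_all

lemma act_ainv (g v) : act g (ainv g v) = v := by
  induction v <;> simp_all [ainv]

lemma ainv_act (g v) : ainv g (act g v) = v := by
  induction v <;> simp_all [ainv]

instance : Group Por := by
  have hm : ∀ a b : Por, ∀ v, act (fun v => b.f v + a.f (act b.f v)) v = act a.f (act b.f v) := by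
    intro a b v
    induction v with
    | nil => rfl
    | cons z v ih => simp [ih, add_assoc]
  have h1 : ∀ v, act (fun _ => 0) v = v := by
    intro v
    induction v <;> simp_all
  have hi : ∀ g v, act (fun v => - g (ainv g v)) v = ainv g v := by
    intro g v
    induction v with
    | nil => rfl
    | cons z v ih => simp [ih, ainv, sub_eq_add_neg]
  exact
  { mul := fun a b => ⟨fun v => b.f v + a.f (act b.f v)⟩
    one := ⟨fun _ => 0⟩
    inv := fun g => ⟨fun v => - g.f (ainv g.f v)⟩
    mul_assoc := by
      intro a b c
      ext v
      change c.f v + (b.f (act c.f v) + a.f (act b.f (act c.f v))) = _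
      change _ = (c.f v + b.f (act c.f v)) + a.f (act (fun v => c.f v + b.f (act c.f v)) v)
      rw [hm, add_assoc]
    one_mul := by
      intro a
      ext v
      exact add_zero _
    mul_one := by
      intro a
      ext v
      change 0 + a.f (act (fun _ => 0) v) = _
      rw [h1, zero_add]
    inv_mul_cancel := by
      intro a
      ext v
      change a.f v + - a.f (ainv a.f (act a.f v)) = 0
      rw [ainv_act, add_neg_cancel] }

lemma mul_f (a b : Por) (v) : (a * b).f v = b.f v + a.f (act b.f v) := rfl
lemma one_f (v) : (1 : Por).f v = 0 := rfl

lemma act_mul (a b : Por) (v) : act (a * b).f v = act a.f (act b.f v) := by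
  induction v with
  | nil => rfl
  | cons z v ih => simp [ih, mul_f, add_assoc]

lemma act_one (v) : act (1 : Por).f v = v := by
  induction v with
  | nil => rfl
  | cons z v ih => simp [ih, one_f]

lemma act_inv_act (g : Por) (v) : act g⁻¹.f (act g.f v) = v := by
  rw [← act_mul, inv_mul_cancel, act_one]

lemma act_act_inv (g : Por) (v) : act g.f (act g⁻¹.f v) = v := by
  rw [← act_mul, mul_inv_cancel, act_one]

/-- supported below level n -/
def Fn (n : ℕ) : Subgroup Por where
  carrier := {g | ∀ v, n ≤ v.length → g.f v = 0}
  mul_mem' := by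
    intro a b ha hb v hv
    rw [mul_f, hb v hv, ha _ (by simpa using hv), add_zero]
  one_mem' := fun v _ => rfl
  inv_mem' := by
    intro a ha v hv
    have h := congrArg (fun g : Por => g.f v) (mul_inv_cancel a)
    simp only [mul_f, one_f] at h
    rw [ha _ (by simpa using hv)] at h
    simpa using h

lemma mem_Fn {n g} : g ∈ Fn n ↔ ∀ v, n ≤ v.length → g.f v = 0 := Iff.rfl

/-- supported on level n -/
def Lev (n : ℕ) : Subgroup Por where
  carrier := {g | ∀ v, v.length ≠ n → g.f v = 0}
  mul_mem' := by
    intro a b ha hb v hv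
    rw [mul_f, hb v hv, ha _ (by simpa using hv), add_zero]
  one_mem' := fun v _ => rfl
  inv_mem' := by
    intro a ha v hv
    have h := congrArg (fun g : Por => g.f v) (mul_inv_cancel a)
    simp only [mul_f, one_f] at h
    rw [ha _ (by simpa using hv)] at h
    simpa using h

lemma Lev_act {n g} (hg : g ∈ Lev n) (v) (hv : v.length ≤ n) : act g.f v = v := by
  induction v with
  | nil => rfl
  | cons z v ih =>
    simp only [List.length_cons] at hv
    rw [act_cons, ih (by omega), hg v (by omega), add_zero]

lemma Lev_comm (n) (g) (hg : g ∈ Lev n) (h) (hh : h ∈ Lev n) : g * h = h * g := by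
  ext v
  rw [mul_f, mul_f]
  by_cases hv : v.length = n
  · rw [Lev_act hg v hv.le, Lev_act hh v hv.le, add_comm]
  · rw [hg v hv, hh v hv, hg _ (by simpa using hv), hh _ (by simpa using hv)]

lemma act_tr (n : ℕ) (g : List ℤ → ℤ) (v) (hv : v.length ≤ n) :
    act (fun v => if v.length < n then g v else 0) v = act g v := by
  induction v with
  | nil => rfl
  | cons z v ih =>
    simp only [List.length_cons] at hv
    rw [act_cons, act_cons, ih (by omega), if_pos (by omega)]

/-- truncation -/
def tr (n : ℕ) : Por →* Por where
  toFun g := ⟨fun v => if v.length < n then g.f v else 0⟩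
  map_one' := by ext v; simp [one_f]
  map_mul' a b := by
    ext v
    rw [mul_f]
    dsimp only
    by_cases hv : v.length < n
    · rw [act_tr n _ v hv.le, act_length]
      simp only [if_pos hv, mul_f]
    · simp [hv]

lemma tr_f (n g v) : (tr n g).f v = if v.length < n then g.f v else 0 := rfl

lemma Am_Fn (n : ℕ) : Am (Fn n) (lam Por) := by
  classical
  induction n with
  | zero =>
    refine Am.abelian _ fun g hg h hh => ?_
    have h1 : g = 1 := by ext v; exact hg v (Nat.zero_le _)
    rw [h1, one_mul, mul_one]
  | succ n ih =>
    refine Am.ext (Fn (n + 1)) ((lam Por).comp (tr n)) ?_ ?_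
    · intro T hT ε hε
      obtain ⟨P, hP⟩ := ih (T.image (tr n)) (by
        intro g hg
        obtain ⟨g', hg', rfl⟩ := Finset.mem_image.1 hg
        intro v hv
        rw [tr_f, if_neg (by omega)]) ε hε
      exact ⟨P, fun g hg => hP _ (Finset.mem_image_of_mem _ hg)⟩
    · intro y
      refine ⟨Lev n, ?_, Am.abelian _ (Lev_comm n)⟩
      intro g hg hy v hv
      have h1 : tr n g = 1 := by
        have : tr n g * y = y := hy
        simpa using this
      rcases lt_or_gt_of_ne hv with h | h
      · have := congrArg (fun g : Por => g.f v) h1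
        simp only [tr_f, if_pos h, one_f] at this
        exact this
      · exact hg v h

lemma Fn_mono {n m : ℕ} (h : n ≤ m) : Fn n ≤ Fn m := fun _ hg v hv => hg v (h.trans hv)

/-- finite depth -/
def FF : Subgroup Por where
  carrier := {g | ∃ n, g ∈ Fn n}
  mul_mem' := by
    rintro a b ⟨n, hn⟩ ⟨m, hm⟩
    exact ⟨max n m, (Fn _).mul_mem (Fn_mono (le_max_left _ _) hn) (Fn_mono (le_max_right _ _) hm)⟩
  one_mem' := ⟨0, (Fn 0).one_mem⟩
  inv_mem' := by
    rintro a ⟨n, hn⟩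
    exact ⟨n, (Fn n).inv_mem hn⟩

lemma Am_FF : Am FF (lam Por) := by
  intro T hT ε hε
  choose! n hn using hT
  refine Am_Fn (T.sup n) T (fun g hg => Fn_mono (Finset.le_sup hg) (hn g hg)) ε hε

/-- finite depth functions -/
def Fd : AddSubgroup (List ℤ → ℤ) where
  carrier := {β | ∃ n : ℕ, ∀ v, n ≤ v.length → β v = 0}
  add_mem' := by
    rintro a b ⟨n, hn⟩ ⟨m, hm⟩
    refine ⟨max n m, fun v hv => ?_⟩
    simp only [Pi.add_apply]
    rw [hn v ((le_max_left _ _).trans hv), hm v ((le_max_right _ _).trans hv), add_zero]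
  zero_mem' := ⟨0, fun _ _ => rfl⟩
  neg_mem' := by
    rintro a ⟨n, hn⟩
    exact ⟨n, fun v hv => by simp [hn v hv]⟩

lemma mem_Fd {β} : β ∈ Fd ↔ ∃ n : ℕ, ∀ v, n ≤ v.length → β v = 0 := Iff.rfl

/-- the space on which the group acts by affine maps -/
abbrev YY := (List ℤ → ℤ) ⧸ Fd

/-- linear part: composition with `u` -/
def lin (g : Por) : YY →+ YY :=
  QuotientAddGroup.map Fd Fd
    { toFun := fun β v => β (act g.f v), map_zero' := rfl, map_add' := fun _ _ => rfl } (by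
      rintro β ⟨n, hn⟩
      exact ⟨n, fun v hv => hn _ (by simpa using hv)⟩)

/-- class of a function -/
def cl (β : List ℤ → ℤ) : YY := QuotientAddGroup.mk β

lemma cl_eq {β γ} : cl β = cl γ ↔ ∃ n : ℕ, ∀ v, n ≤ v.length → β v = γ v := by
  unfold cl
  rw [eq_comm, QuotientAddGroup.eq, mem_Fd]
  simp only [Pi.add_apply, Pi.neg_apply, neg_add_eq_zero, eq_comm]

lemma lin_cl (g : Por) (β) : lin g (cl β) = cl (fun v => β (act g.f v)) := rfl

lemma cl_add (β γ) : cl (fun v => β v + γ v) = cl β + cl γ := rfl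

/-- affine map `β ↦ β ∘ g + g.f`-/
def aff (g : Por) (y : YY) : YY := lin g y + cl g.f

lemma aff_cl (g : Por) (β) : aff g (cl β) = cl (fun v => g.f v + β (act g.f v)) := by
  rw [aff, lin_cl, ← cl_add]
  simp only [add_comm]

lemma cl_surj (y : YY) : ∃ β, cl β = y := QuotientAddGroup.mk_surjective y

lemma aff_mul (a b : Por) (y) : aff (a * b) y = aff b (aff a y) := by
  obtain ⟨β, rfl⟩ := cl_surj y
  simp only [aff_cl, act_mul, mul_f, add_assoc]

lemma aff_one (y) : aff 1 y = y := by
  obtain ⟨β, rfl⟩ := cl_surj y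
  simp only [aff_cl, act_one, one_f, zero_add]

/-- the affine action -/
def rho : Por →* Equiv.Perm YY where
  toFun g :=
    { toFun := aff g⁻¹
      invFun := aff g
      left_inv := fun y => by rw [← aff_mul, inv_mul_cancel, aff_one]
      right_inv := fun y => by rw [← aff_mul, mul_inv_cancel, aff_one] }
  map_one' := by
    ext y
    simp [aff_one]
  map_mul' a b := by
    ext y
    simp [aff_mul]

lemma rho_apply (g y) : rho g y = aff g⁻¹ y := rfl

lemma stab_conj (h g : Por) (hg : rho g (cl h.f) = cl h.f) : h * g * h⁻¹ ∈ FF := by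
  rw [rho_apply, aff_cl, cl_eq] at hg
  obtain ⟨n, hn⟩ := hg
  have : h * g⁻¹ * h⁻¹ ∈ FF := by
    refine ⟨n, fun v hv => ?_⟩
    have h1 := congrArg (fun g : Por => g.f v) (mul_inv_cancel h)
    simp only [mul_f, one_f] at h1
    rw [mul_f, mul_f, hn _ (by simpa using hv), h1]
  have := FF.inv_mem this
  simpa [mul_assoc] using this

/-- Main reduction. -/
lemma Am_of_rho (H : Subgroup Por) (h : Am H rho) : Am H (lam Por) := by
  refine Am.ext H rho h fun y => ?_
  obtain ⟨β, rfl⟩ := cl_surj y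
  refine ⟨FF.comap (MulAut.conj (⟨β⟩ : Por)).toMonoidHom, ?_, Am.conj _ Am_FF _⟩
  intro g _ hg
  exact stab_conj ⟨β⟩ g hg

/-- The permutation of words. -/
def theta : Por →* Equiv.Perm (List ℤ) where
  toFun g :=
    { toFun := fun v => (act g.f v.reverse).reverse
      invFun := fun v => (act g⁻¹.f v.reverse).reverse
      left_inv := fun v => by simp [act_inv_act]
      right_inv := fun v => by simp [act_act_inv] }
  map_one' := by
    ext1 v
    simp [act_one]
  map_mul' a b := by
    ext1 v
    simp [act_mul]

lemma theta_apply (g : Por) (v) : theta g v = (act g.f v.reverse).reverse := rfl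

end KG


namespace KG

lemma weier {α : Type} (s : Finset α) (v : α → ℝ) (h0 : ∀ a ∈ s, 0 ≤ v a) (h1 : ∀ a ∈ s, v a ≤ 1) :
    1 - ∑ a ∈ s, (1 - v a) ≤ ∏ a ∈ s, v a ∧ ∏ a ∈ s, v a ≤ 1 := by
  classical
  induction s using Finset.induction_on with
  | empty => simp
  | insert a s ha ih =>
    obtain ⟨i1, i2⟩ := ih (fun b hb => h0 b (by simp [hb])) (fun b hb => h1 b (by simp [hb]))
    have p0 : 0 ≤ ∏ a ∈ s, v a := Finset.prod_nonneg fun b hb => h0 b (by simp [hb])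
    rw [Finset.sum_insert ha, Finset.prod_insert ha]
    have a0 := h0 a (by simp)
    have a1 := h1 a (by simp)
    constructor <;> nlinarith

/-- Hellinger estimate for products -/
lemma hell {α : Type} [Fintype α] [DecidableEq α] (R : Finset ℕ) (f g : α → ℕ → ℝ)
    (hf0 : ∀ a m, 0 ≤ f a m) (hg0 : ∀ a m, 0 ≤ g a m)
    (hf : ∀ a, ∑ m ∈ R, f a m ^ 2 = 1) (hg : ∀ a, ∑ m ∈ R, g a m ^ 2 = 1) (η : ℝ)
    (hη : ∑ a, (1 - ∑ m ∈ R, f a m * g a m) ≤ η) :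
    ∑ c ∈ Fintype.piFinset (fun _ : α => R), |∏ a, f a (c a) ^ 2 - ∏ a, g a (c a) ^ 2|
      ≤ Real.sqrt (8 * η) := by
  set C := Fintype.piFinset (fun _ : α => R)
  have hv0 : ∀ a ∈ Finset.univ, 0 ≤ ∑ m ∈ R, f a m * g a m := fun a _ =>
    Finset.sum_nonneg fun m _ => mul_nonneg (hf0 _ _) (hg0 _ _)
  have hv1 : ∀ a ∈ Finset.univ, ∑ m ∈ R, f a m * g a m ≤ 1 := fun a _ => by
    have : 0 ≤ ∑ m ∈ R, (f a m - g a m) ^ 2 := Finset.sum_nonneg fun m _ => sq_nonneg _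
    simp only [sub_sq, Finset.sum_add_distrib, Finset.sum_sub_distrib, hf, hg, mul_assoc] at this
    rw [← Finset.mul_sum] at this
    linarith
  obtain ⟨w1, w2⟩ := weier Finset.univ (fun a => ∑ m ∈ R, f a m * g a m) hv0 hv1
  have e1 : ∑ c ∈ C, (∏ a, f a (c a)) ^ 2 = 1 := by
    simp only [← Finset.prod_pow]
    rw [← Finset.prod_univ_sum (fun _ => R) (fun a m => f a m ^ 2)]
    simp [hf]
  have e2 : ∑ c ∈ C, (∏ a, g a (c a)) ^ 2 = 1 := by
    simp only [← Finset.prod_pow]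
    rw [← Finset.prod_univ_sum (fun _ => R) (fun a m => g a m ^ 2)]
    simp [hg]
  have e3 : ∑ c ∈ C, (∏ a, f a (c a)) * (∏ a, g a (c a)) = ∏ a, ∑ m ∈ R, f a m * g a m := by
    simp only [← Finset.prod_mul_distrib]
    rw [← Finset.prod_univ_sum (fun _ => R) (fun a m => f a m * g a m)]
  have e4 : ∑ c ∈ C, (∏ a, f a (c a) - ∏ a, g a (c a)) ^ 2 ≤ 2 * η := by
    simp only [sub_sq, Finset.sum_add_distrib, Finset.sum_sub_distrib, e1, e2, mul_assoc]
    rw [← Finset.mul_sum, e3]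
    linarith
  have e5 : ∑ c ∈ C, (∏ a, f a (c a) + ∏ a, g a (c a)) ^ 2 ≤ 4 := by
    simp only [add_sq, Finset.sum_add_distrib, e1, e2, mul_assoc]
    rw [← Finset.mul_sum, e3]
    linarith
  apply Real.le_sqrt_of_sq_le
  have cs := Finset.sum_mul_sq_le_sq_mul_sq C (fun c => |∏ a, f a (c a) - ∏ a, g a (c a)|)
    (fun c => |∏ a, f a (c a) + ∏ a, g a (c a)|)
  simp only [sq_abs, ← abs_mul] at cs
  have e6 : ∑ c ∈ C, |∏ a, f a (c a) ^ 2 - ∏ a, g a (c a) ^ 2| =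
      ∑ c ∈ C, |(∏ a, f a (c a) - ∏ a, g a (c a)) * (∏ a, f a (c a) + ∏ a, g a (c a))| := by
    refine Finset.sum_congr rfl fun c _ => ?_
    rw [Finset.prod_pow, Finset.prod_pow]
    congr 1
    ring
  rw [e6]
  refine cs.trans ?_
  have n1 : 0 ≤ ∑ c ∈ C, (∏ a, f a (c a) - ∏ a, g a (c a)) ^ 2 :=
    Finset.sum_nonneg fun _ _ => sq_nonneg _
  have n2 : 0 ≤ ∑ c ∈ C, (∏ a, f a (c a) + ∏ a, g a (c a)) ^ 2 :=
    Finset.sum_nonneg fun _ _ => sq_nonneg _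
  nlinarith

/-- one-lamp vectors -/
noncomputable def psi (N : ℕ) (θ : ℝ) (m : ℕ) : ℝ :=
  if m = 0 then Real.cos θ else if m ≤ N then Real.sin θ / Real.sqrt N else 0

lemma psi_inner (n : ℕ) (θ θ' : ℝ) :
    ∑ m ∈ Finset.range (n + 3), psi (n + 1) θ m * psi (n + 1) θ' m = Real.cos (θ - θ') := by
  rw [Finset.sum_range_succ', Finset.sum_range_succ]
  have : ∀ m ∈ Finset.range (n + 1), psi (n + 1) θ (m + 1) * psi (n + 1) θ' (m + 1)
      = Real.sin θ * Real.sin θ' / (n + 1 : ℝ) := by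
    intro m hm
    rw [Finset.mem_range] at hm
    simp only [psi, Nat.succ_ne_zero, if_false, show m + 1 ≤ n + 1 by omega, if_true]
    rw [div_mul_div_comm, Real.mul_self_sqrt (by positivity)]
    push_cast
    rfl
  rw [Finset.sum_congr rfl this]
  simp only [psi, Real.cos_sub, Finset.sum_const, Finset.card_range]
  simp
  field_simp
  ring

lemma psi_sq (n : ℕ) (θ : ℝ) : ∑ m ∈ Finset.range (n + 3), psi (n + 1) θ m ^ 2 = 1 := by
  have := psi_inner n θ θ
  simpa [sq] using this

lemma psi_nonneg (N : ℕ) {θ : ℝ} (h0 : 0 ≤ θ) (h1 : θ ≤ Real.pi / 2) (m : ℕ) : 0 ≤ psi N θ m := by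
  unfold psi
  split_ifs
  · exact Real.cos_nonneg_of_neg_pi_div_two_le_of_le (by linarith [Real.pi_pos]) h1
  · exact div_nonneg (Real.sin_nonneg_of_nonneg_of_le_pi h0 (by linarith [Real.pi_pos]))
      (Real.sqrt_nonneg _)
  · exact le_rfl

lemma psi_zero (N : ℕ) {m : ℕ} (h : m ≠ 0) : psi N 0 m = 0 := by simp [psi, h]

lemma psi_big {N m : ℕ} (θ) (h : N < m) : psi N θ m = 0 := by
  simp [psi, show m ≠ 0 by omega, show ¬ m ≤ N by omega]

lemma psi_half (N : ℕ) : psi N (Real.pi / 2) 0 = 0 := by simp [psi]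

lemma psi_shift_sq (n : ℕ) :
    ∑ m ∈ Finset.range (n + 3), psi (n + 1) (Real.pi / 2) (m - 1) ^ 2 = 1 := by
  rw [Finset.sum_range_succ']
  have := psi_sq n (Real.pi / 2)
  rw [Finset.sum_range_succ, psi_big _ (by omega)] at this
  simp only [Nat.add_sub_cancel]
  simpa [psi_half] using this

lemma psi_shift (n : ℕ) :
    ∑ m ∈ Finset.range (n + 3), psi (n + 1) (Real.pi / 2) m * psi (n + 1) (Real.pi / 2) (m - 1)
      = 1 - 1 / (n + 1) := by
  rw [Finset.sum_range_succ', Finset.sum_range_succ', Finset.sum_range_succ]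
  have : ∀ m ∈ Finset.range n, psi (n + 1) (Real.pi / 2) (m + 1 + 1) *
      psi (n + 1) (Real.pi / 2) (m + 1 + 1 - 1) = 1 / (n + 1 : ℝ) := by
    intro m hm
    rw [Finset.mem_range] at hm
    simp only [psi, Nat.succ_ne_zero, if_false, show m + 1 + 1 ≤ n + 1 by omega, if_true,
      Nat.add_sub_cancel, show m + 1 ≤ n + 1 by omega, Real.sin_pi_div_two]
    rw [div_mul_div_comm, Real.mul_self_sqrt (by positivity)]
    push_cast
    ring
  rw [Finset.sum_congr rfl this, psi_big _ (show n + 1 < n + 1 + 1 by omega)]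
  simp [psi_half]
  field_simp
  ring

/-- the core estimate for one affine map -/
lemma lamp_core {α Y : Type} [Fintype α] [DecidableEq α] [AddCommGroup Y] (e e' : α → Y)
    (θ : α → ℝ) (h0 : ∀ a, 0 ≤ θ a) (h1 : ∀ a, θ a ≤ Real.pi / 2) (n : ℕ)
    (σ : Equiv.Perm α) (hσ : ∀ a, θ a ≠ 0 → e' a = e (σ a))
    (κ : α → ℕ) (hκ1 : ∀ a, κ a ≤ 1) (hκ : ∀ a, κ a = 1 → θ a = Real.pi / 2 ∧ σ a = a)
    (f : Y → ℝ) (hf : ∀ y, |f y| ≤ 1) (η : ℝ)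
    (hη : ∑ a, ((θ a - θ (σ.symm a)) ^ 2 / 2 + (κ a : ℝ) / (n + 1)) ≤ η) :
    |∑ c ∈ Fintype.piFinset (fun _ : α => Finset.range (n + 3)),
        (∏ a, psi (n + 1) (θ a) (c a) ^ 2) * f (∑ a, c a • e' a + ∑ a, κ a • e a) -
      ∑ c ∈ Fintype.piFinset (fun _ : α => Finset.range (n + 3)),
        (∏ a, psi (n + 1) (θ a) (c a) ^ 2) * f (∑ a, c a • e a)| ≤ Real.sqrt (8 * η) := by
  set C := Fintype.piFinset (fun _ : α => Finset.range (n + 3)) with hC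
  let g : α → ℕ → ℝ := fun b m => psi (n + 1) (θ (σ.symm b)) (m - κ b)
  have hκs : ∀ a, κ a = 1 → θ (σ.symm a) = Real.pi / 2 := fun a ha => by
    have := (hκ a ha).2
    rw [show σ.symm a = a by rw [Equiv.symm_apply_eq, this]]
    exact (hκ a ha).1
  have hκc : ∀ a, κ a = 0 ∨ κ a = 1 := fun a => by have := hκ1 a; omega
  have key : ∑ c ∈ C, (∏ a, psi (n + 1) (θ a) (c a) ^ 2) * f (∑ a, c a • e' a + ∑ a, κ a • e a)
      = ∑ c ∈ C, (∏ a, g a (c a) ^ 2) * f (∑ a, c a • e a) := by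
    have hprod : ∀ c : α → ℕ, ∏ b, g b (c (σ.symm b) + κ b) ^ 2
        = ∏ a, psi (n + 1) (θ a) (c a) ^ 2 := by
      intro c
      simp only [g, Nat.add_sub_cancel]
      exact Equiv.prod_comp σ.symm (fun a => psi (n + 1) (θ a) (c a) ^ 2)
    refine Finset.sum_bij_ne_zero (fun c _ _ => fun b => c (σ.symm b) + κ b) ?_ ?_ ?_ ?_
    · intro c hc hne
      rw [hC, Fintype.mem_piFinset]
      intro b
      have h2 : psi (n + 1) (θ (σ.symm b)) (c (σ.symm b)) ≠ 0 := by
        intro h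
        apply hne
        rw [Finset.prod_eq_zero (Finset.mem_univ (σ.symm b)) (by rw [h]; simp), zero_mul]
      have h3 : c (σ.symm b) ≤ n + 1 := by
        by_contra h
        exact h2 (psi_big _ (by omega))
      have := hκ1 b
      rw [Finset.mem_range]
      omega
    · intro c _ _ c' _ _ h
      ext a
      have := congrFun h (σ a)
      simpa using this
    · intro c' hc' hne
      have hne' : ∀ b, g b (c' b) ≠ 0 := by
        intro b h
        apply hne
        rw [Finset.prod_eq_zero (Finset.mem_univ b) (by rw [h]; simp), zero_mul]
      have hle : ∀ b, κ b ≤ c' b := by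
        intro b
        rcases hκc b with h | h
        · omega
        · by_contra h'
          apply hne' b
          simp only [g]
          rw [hκs b h, show c' b - κ b = 0 by omega, psi_half]
      have hc'' : (fun b => (c' (σ (σ.symm b)) - κ (σ (σ.symm b))) + κ b) = c' := by
        ext b
        simp [hle b]
      have hc3 : ∏ a, psi (n + 1) (θ a) ((fun a => c' (σ a) - κ (σ a)) a) ^ 2
          = ∏ b, g b (c' b) ^ 2 := by
        rw [← hprod]
        exact Finset.prod_congr rfl fun b _ => by rw [congrFun hc'' b]
      refine ⟨fun a => c' (σ a) - κ (σ a), ?_, ?_, hc''⟩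
      · rw [hC, Fintype.mem_piFinset] at *
        intro a
        have := hc' (σ a)
        rw [Finset.mem_range] at *
        omega
      · rw [hc3]
        have hw : ∏ b, g b (c' b) ^ 2 ≠ 0 := fun h => hne (by rw [h, zero_mul])
        have hfe : ∑ a, (c' (σ a) - κ (σ a)) • e' a + ∑ a, κ a • e a = ∑ a, c' a • e a := by
          have : ∑ a, (c' (σ a) - κ (σ a)) • e' a = ∑ a, (c' (σ a) - κ (σ a)) • e (σ a) := by
            refine Finset.sum_congr rfl fun a _ => ?_
            by_cases ha : θ a = 0
            · have h5 : c' (σ a) - κ (σ a) = 0 := by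
                by_contra h6
                apply hne' (σ a)
                simp only [g, Equiv.symm_apply_apply, ha]
                exact psi_zero _ h6
              rw [h5, zero_smul, zero_smul]
            · rw [hσ a ha]
          rw [this, Equiv.sum_comp σ (fun b => (c' b - κ b) • e b), ← Finset.sum_add_distrib]
          refine Finset.sum_congr rfl fun a _ => ?_
          rw [← add_smul, Nat.sub_add_cancel (hle a)]
        rw [hfe]
        exact hne
    · intro c _ hne
      rw [hprod]
      congr 2
      have hw : ∀ a, psi (n + 1) (θ a) (c a) ≠ 0 := by
        intro b h
        apply hne
        rw [Finset.prod_eq_zero (Finset.mem_univ b) (by rw [h]; simp), zero_mul]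
      have : ∑ a, c a • e' a = ∑ a, c a • e (σ a) := by
        refine Finset.sum_congr rfl fun a _ => ?_
        by_cases ha : θ a = 0
        · have h5 : c a = 0 := by
            by_contra h6
            apply hw a
            rw [ha]
            exact psi_zero _ h6
          rw [h5, zero_smul, zero_smul]
        · rw [hσ a ha]
      rw [this]
      simp only [add_smul, Finset.sum_add_distrib]
      congr 1
      rw [← Equiv.sum_comp σ (fun b => c (σ.symm b) • e b)]
      simp
  rw [key, ← Finset.sum_sub_distrib]
  refine (Finset.abs_sum_le_sum_abs _ _).trans ?_
  refine le_trans (Finset.sum_le_sum fun c _ => ?_)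
    (hell (Finset.range (n + 3)) g (fun a => psi (n + 1) (θ a)) ?_ ?_ ?_ ?_ η ?_)
  · rw [← sub_mul, abs_mul]
    exact mul_le_of_le_one_right (abs_nonneg _) (hf _)
  · exact fun a m => psi_nonneg _ (h0 _) (h1 _) _
  · exact fun a m => psi_nonneg _ (h0 _) (h1 _) _
  · intro a
    rcases hκc a with h | h
    · simp only [g, h, Nat.sub_zero]
      exact psi_sq _ _
    · simp only [g, h, hκs a h]
      exact psi_shift_sq n
  · exact fun a => psi_sq _ _
  · refine le_trans (Finset.sum_le_sum fun a _ => ?_) hη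
    rcases hκc a with h | h
    · simp only [g, h, Nat.sub_zero]
      rw [psi_inner]
      have := Real.one_sub_sq_div_two_le_cos (x := θ (σ.symm a) - θ a)
      simp only [Nat.cast_zero, zero_div, add_zero]
      nlinarith
    · simp only [g, h, hκs a h, (hκ a h).1]
      simp only [mul_comm (psi _ _ (_ - 1))]
      rw [psi_shift]
      simp

/-- Recurrence implies almost invariant probabilities for the affine action. -/
lemma lamp {X Y ι : Type} [Finite ι] [AddCommGroup Y] (e : X → Y) (u : ι → Y → Y)
    (L : ι → (Y →+ Y)) (t : ι → Y) (hu : ∀ i y, u i y = L i y + t i)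
    (π : ι → Equiv.Perm X) (hL : ∀ i x, L i (e x) = e (π i x)) (X0 : Set X)
    (ht : ∀ i, t i = 0 ∨ ∃ x0 ∈ X0, π i x0 = x0 ∧ t i = e x0)
    (hrec : ∀ ε : ℝ, 0 < ε → ∃ Φ : X → ℝ, (Function.support Φ).Finite ∧ (∀ x, 0 ≤ Φ x) ∧
      (∀ x, Φ x ≤ 1) ∧ (∀ x ∈ X0, Φ x = 1) ∧
      ∀ i, ∀ E : Finset X, ∑ x ∈ E, (Φ (π i x) - Φ x) ^ 2 ≤ ε)
    (ε : ℝ) (hε : 0 < ε) : ∃ P : FProb Y, ∀ i, P.AI (u i) ε := by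
  classical
  have := Fintype.ofFinite ι
  obtain ⟨δ, hδ0, hδ⟩ : ∃ δ : ℝ, 0 < δ ∧ Real.sqrt (8 * (3 * δ)) ≤ ε := by
    refine ⟨ε ^ 2 / 24, by positivity, ?_⟩
    rw [show 8 * (3 * (ε ^ 2 / 24)) = ε ^ 2 by ring, Real.sqrt_sq hε.le]
  obtain ⟨n, hn⟩ := exists_nat_one_div_lt hδ0
  obtain ⟨Φ, hfin, hΦ0, hΦ1, hΦX, hΦ⟩ := hrec δ hδ0
  let E0 : Finset X := hfin.toFinset
  let E : Finset X := E0 ∪ Finset.univ.biUnion fun i => E0.image (π i)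
  have hE0 : ∀ x, Φ x ≠ 0 → x ∈ E := fun x hx =>
    Finset.mem_union_left _ (by simpa [E0] using hx)
  have hE1 : ∀ i x, Φ x ≠ 0 → π i x ∈ E := fun i x hx =>
    Finset.mem_union_right _ (Finset.mem_biUnion.2 ⟨i, Finset.mem_univ _,
      Finset.mem_image_of_mem _ (by simpa [E0] using hx)⟩)
  let θ : E → ℝ := fun a => Real.pi / 2 * Φ a
  have hθ0 : ∀ a, 0 ≤ θ a := fun a => mul_nonneg (by positivity) (hΦ0 _)
  have hθ1 : ∀ a, θ a ≤ Real.pi / 2 := fun a =>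
    mul_le_of_le_one_right (by positivity) (hΦ1 _)
  let C := Fintype.piFinset (fun _ : E => Finset.range (n + 3))
  refine ⟨FProb.wsum C (fun c => ∏ a, psi (n + 1) (θ a) (c a) ^ 2)
    (fun c => ∑ a, c a • e a) (fun c _ => Finset.prod_nonneg fun _ _ => sq_nonneg _) ?_, ?_⟩
  · rw [← Finset.prod_univ_sum (fun _ => Finset.range (n + 3))
      (fun a m => psi (n + 1) (θ a) m ^ 2)]
    simp [psi_sq]
  intro i f hf
  rw [FProb.wsum_M, FProb.wsum_M]
  obtain ⟨σ, hσ⟩ : ∃ σ : Equiv.Perm E, ∀ a : E, Φ a ≠ 0 → (σ a : X) = π i a := by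
    let s : {a : E // Φ a ≠ 0} ≃ {b : E // Φ ((π i).symm b) ≠ 0} :=
      { toFun := fun a => ⟨⟨π i a, hE1 i _ a.2⟩, by simpa using a.2⟩
        invFun := fun b => ⟨⟨(π i).symm b, hE0 _ b.2⟩, b.2⟩
        left_inv := fun a => by simp
        right_inv := fun b => by simp }
    refine ⟨s.extendSubtype, fun a ha => ?_⟩
    rw [Equiv.extendSubtype_apply_of_mem s a ha]
    rfl
  obtain ⟨κ, hκ1, hκ2, hκt, hκs⟩ : ∃ κ : E → ℕ, (∀ a, κ a ≤ 1) ∧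
      (∀ a, κ a = 1 → Φ a = 1 ∧ π i a = a) ∧ t i = ∑ a, κ a • e a ∧ ∑ a, κ a ≤ 1 := by
    rcases ht i with h | ⟨x0, hx0, hp, h⟩
    · exact ⟨fun _ => 0, by simp, by simp, by simp [h], by simp⟩
    · have hx1 : Φ x0 = 1 := hΦX x0 hx0
      have hxE : x0 ∈ E := hE0 x0 (by simp [hx1])
      refine ⟨fun a => if a = ⟨x0, hxE⟩ then 1 else 0, ?_, ?_, ?_, ?_⟩
      · intro a
        dsimp only
        split_ifs <;> simp
      · intro a ha
        dsimp only at ha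
        split_ifs at ha with h2
        subst h2
        exact ⟨hx1, hp⟩
      · simp [h, ite_smul]
      · simp
  have hmap : ∀ c : E → ℕ, u i (∑ a, c a • e a) = ∑ a, c a • e (π i a) + ∑ a, κ a • e a := by
    intro c
    rw [hu, hκt, map_sum]
    simp only [map_nsmul, hL]
  simp only [hmap]
  refine (lamp_core (fun a : E => e a) (fun a : E => e (π i a)) θ hθ0 hθ1 n σ ?_ κ hκ1 ?_ f hf
    (3 * δ) ?_).trans hδ
  · intro a ha
    rw [hσ a (fun h => ha (by simp [θ, h]))]
  · intro a ha
    obtain ⟨h1, h2⟩ := hκ2 a ha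
    refine ⟨by simp [θ, h1], ?_⟩
    ext
    rw [hσ a (by simp [h1]), h2]
  · rw [Finset.sum_add_distrib]
    have b1 : ∑ a, (κ a : ℝ) / (n + 1) ≤ δ := by
      rw [← Finset.sum_div]
      have : (∑ a, (κ a : ℝ)) ≤ 1 := by exact_mod_cast hκs
      refine le_trans ?_ hn.le
      gcongr
    have hs : ∀ a : E, Φ (σ.symm a) = Φ ((π i).symm a) := by
      intro a
      by_cases h : Φ (σ.symm a) = 0
      · rw [h]
        by_contra h2
        have h3 : Φ ((π i).symm a) ≠ 0 := fun h => h2 h.symm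
        let b : E := ⟨(π i).symm a, hE0 _ h3⟩
        have h4 : σ b = a := by
          ext
          rw [hσ b h3]
          simp [b]
        rw [← h4] at h
        simp [b] at h
        exact h3 h
      · have := hσ (σ.symm a) h
        rw [Equiv.apply_symm_apply] at this
        rw [this, Equiv.symm_apply_apply]
    have b2 : ∑ a : E, (θ a - θ (σ.symm a)) ^ 2 / 2 ≤ 2 * δ := by
      have h1 : ∀ a : E, (θ a - θ (σ.symm a)) ^ 2 / 2
          ≤ 2 * (Φ (π i ((π i).symm a)) - Φ ((π i).symm a)) ^ 2 := by
        intro a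
        simp only [θ, hs, Equiv.apply_symm_apply]
        rw [← mul_sub, mul_pow]
        have hpi : (Real.pi / 2) ^ 2 ≤ 4 := by
          have := Real.pi_le_four
          have := Real.pi_pos
          nlinarith
        have := sq_nonneg (Φ a - Φ ((π i).symm a))
        nlinarith
      refine (Finset.sum_le_sum fun a _ => h1 a).trans ?_
      rw [← Finset.mul_sum]
      have h2 := hΦ i (E.image (π i).symm)
      rw [Finset.sum_image (fun _ _ _ _ h => (π i).symm.injective h)] at h2
      rw [Finset.sum_coe_sort E (fun a => (Φ (π i ((π i).symm a)) - Φ ((π i).symm a)) ^ 2)]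
      linarith
    linarith

end KG


namespace KG

/-- The sequence of letters. -/
def dd (k p : ℕ) (x y : ℕ → ℤ) (i : ℕ) : ℤ := if i < k then x i else y ((i - k) % p)

/-- reversed critical words -/
def DD (k p : ℕ) (x y : ℕ → ℤ) (n : ℕ) : List ℤ := (List.range n).map (dd k p x y)

/-- active levels -/
def II (k p : ℕ) : KState → ℕ → Prop
  | .a i, n => n = i
  | .b j, n => k ≤ n ∧ (n - k) % p = j
  | .id, _ => False

open Classical in
/-- portrait of a generator -/
noncomputable def gen (k p : ℕ) (x y : ℕ → ℤ) (s : KState) : Por :=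
  ⟨fun v => if v = DD k p x y v.length ∧ II k p s v.length then 1 else 0⟩

section
variable {k p : ℕ} {x y : ℕ → ℤ}

lemma gen_f (s v) : (gen k p x y s).f v = 0 ∨ (gen k p x y s).f v = 1 := by
  unfold gen
  dsimp only
  split_ifs <;> simp

lemma gen_ne {s v} : (gen k p x y s).f v ≠ 0 ↔ v = DD k p x y v.length ∧ II k p s v.length := by
  unfold gen
  dsimp only
  split_ifs with h
  · exact iff_of_true one_ne_zero h
  · exact iff_of_false (by simp) h

@[simp] lemma DD_length (n) : (DD k p x y n).length = n := by simp [DD]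

lemma DD_succ (n) : DD k p x y (n + 1) = DD k p x y n ++ [dd k p x y n] := by
  simp [DD, List.range_succ]

lemma succ_mod (hp : 1 ≤ p) (m : ℕ) : (m + 1) % p = if m % p + 1 = p then 0 else m % p + 1 := by
  have h := Nat.mod_lt m (by omega : 0 < p)
  rw [Nat.add_mod]
  split_ifs with h1
  · rcases Nat.lt_or_ge 1 p with h2 | h2
    · rw [Nat.mod_eq_of_lt h2, h1, Nat.mod_self]
    · have : p = 1 := by omega
      subst this
      omega
  · rw [Nat.mod_eq_of_lt (by omega : 1 < p), Nat.mod_eq_of_lt (by omega)]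

lemma II_step (hk : 1 ≤ k) (hp : 1 ≤ p) (hxy : x (k - 1) ≠ y (p - 1)) (s : KState)
    (hs : IsGen k p s ∨ s = .id) (z : ℤ) :
    (IsGen k p (KTrans k p x y s z).2 ∨ (KTrans k p x y s z).2 = .id) ∧
    ∀ n, (z = dd k p x y n ∧ II k p s (n + 1)) ↔ II k p (KTrans k p x y s z).2 n := by
  rcases hs with (⟨i, hi, rfl⟩ | ⟨j, hj, rfl⟩) | rfl
  · cases i with
    | zero => simp [KTrans, II]
    | succ i =>
      simp only [KTrans, II]
      by_cases h : z = x i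
      · simp only [if_pos h]
        refine ⟨Or.inl (Or.inl ⟨i, by omega, rfl⟩), fun n => ?_⟩
        simp only [dd]
        constructor
        · rintro ⟨h1, h2⟩; omega
        · rintro rfl; rw [if_pos (by omega)]; exact ⟨h, rfl⟩
      · simp only [if_neg h]
        refine ⟨Or.inr trivial, fun n => ?_⟩
        simp only [dd, iff_false]
        rintro ⟨h1, h2⟩
        have : n = i := by omega
        subst this
        rw [if_pos (by omega)] at h1
        exact h h1
  · have key : ∀ n, k ≤ n → (n + 1 - k) % p = if (n - k) % p + 1 = p then 0 else (n-k) % p + 1 := by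
      intro n hn
      rw [show n + 1 - k = n - k + 1 by omega]
      exact succ_mod hp _
    have lt : ∀ n, (n - k) % p < p := fun n => Nat.mod_lt _ (by omega)
    cases j with
    | zero =>
      simp only [KTrans, II]
      by_cases h : z = x (k - 1)
      · simp only [if_pos h]
        refine ⟨Or.inl (Or.inl ⟨k - 1, by omega, rfl⟩), fun n => ?_⟩
        simp only [dd]
        constructor
        · rintro ⟨h1, h2, h3⟩
          by_contra h4
          have hn : k ≤ n := by omega
          rw [key n hn] at h3
          split_ifs at h3 with h5
          rw [if_neg (by omega), show (n - k) % p = p - 1 by omega] at h1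
          exact hxy (h.symm.trans h1)
        · rintro rfl
          rw [if_pos (by omega), show k - 1 + 1 - k = 0 by omega]
          exact ⟨h, by omega, Nat.zero_mod _⟩
      · simp only [if_neg h]
        by_cases h' : z = y (p - 1)
        · simp only [if_pos h']
          refine ⟨Or.inl (Or.inr ⟨p - 1, by omega, rfl⟩), fun n => ?_⟩
          simp only [dd]
          constructor
          · rintro ⟨h1, h2, h3⟩
            by_cases hn : k ≤ n
            · refine ⟨hn, ?_⟩
              rw [key n hn] at h3
              split_ifs at h3 with h5
              omega
            · exfalso
              rw [if_pos (by omega), show n = k - 1 by omega] at h1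
              exact h h1
          · rintro ⟨h2, h3⟩
            rw [if_neg (by omega), h3, key n h2, if_pos (by omega)]
            exact ⟨h', by omega, rfl⟩
        · simp only [if_neg h']
          refine ⟨Or.inr trivial, fun n => ?_⟩
          simp only [dd, iff_false]
          rintro ⟨h1, h2, h3⟩
          by_cases hn : k ≤ n
          · rw [key n hn] at h3
            split_ifs at h3 with h5
            rw [if_neg (by omega), show (n - k) % p = p - 1 by omega] at h1
            exact h' h1
          · rw [if_pos (by omega), show n = k - 1 by omega] at h1
            exact h h1
    | succ j =>
      simp only [KTrans, II]
      have key2 : ∀ n, (k ≤ n + 1 ∧ (n + 1 - k) % p = j + 1) ↔ (k ≤ n ∧ (n - k) % p = j) := by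
        intro n
        by_cases hn : k ≤ n
        · rw [key n hn]
          have := lt n
          generalize (n - k) % p = r at this ⊢
          split_ifs with h5 <;> constructor <;> rintro ⟨h7, h8⟩ <;> refine ⟨?_, ?_⟩ <;> first | omega | exact h8.elim
        · constructor
          · rintro ⟨h1, h2⟩
            rw [show n + 1 - k = 0 by omega] at h2
            simp at h2
          · omega
      by_cases h : z = y j
      · simp only [if_pos h]
        refine ⟨Or.inl (Or.inr ⟨j, by omega, rfl⟩), fun n => ?_⟩
        rw [key2]
        simp only [and_iff_right_iff_imp]
        rintro ⟨h1, h2⟩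
        rw [dd, if_neg (by omega), h2, h]
      · simp only [if_neg h]
        refine ⟨Or.inr trivial, fun n => ?_⟩
        rw [key2]
        simp only [iff_false]
        rintro ⟨h0, h1, h2⟩
        rw [dd, if_neg (by omega), h2] at h0
        exact h h0
  · simp [KTrans, II]

lemma act_append (g : List ℤ → ℤ) (w v : List ℤ) :
    act g (w ++ v) = act (fun u => g (u ++ v)) w ++ act g v := by
  induction w with
  | nil => rfl
  | cons z w ih => simp [ih]

lemma gen_step (hk : 1 ≤ k) (hp : 1 ≤ p) (hxy : x (k - 1) ≠ y (p - 1)) (s : KState)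
    (hs : IsGen k p s ∨ s = .id) (z : ℤ) (w : List ℤ) :
    (gen k p x y s).f (w ++ [z]) = (gen k p x y (KTrans k p x y s z).2).f w := by
  unfold gen
  dsimp only
  congr 1
  rw [← (II_step hk hp hxy s hs z).2, List.length_append, List.length_singleton, DD_succ,
    eq_iff_iff, ← and_assoc]
  refine and_congr_left fun _ => ?_
  constructor
  · intro h
    obtain ⟨h1, h2⟩ := List.append_inj h (by simp)
    exact ⟨h1, by simpa using h2⟩
  · rintro ⟨h1, h2⟩
    rw [← h1, h2]

lemma stateAct_eq (hk : 1 ≤ k) (hp : 1 ≤ p) (hxy : x (k - 1) ≠ y (p - 1)) (v : List ℤ) :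
    ∀ s, (IsGen k p s ∨ s = .id) →
      stateAct k p x y s v = (act (gen k p x y s).f v.reverse).reverse := by
  induction v with
  | nil => intro s _; simp [stateAct]
  | cons z v ih =>
    intro s hs
    rw [stateAct, ih _ (II_step hk hp hxy s hs z).1, List.reverse_cons, act_append]
    have h1 : (fun u => (gen k p x y s).f (u ++ [z])) = (gen k p x y (KTrans k p x y s z).2).f := by
      funext u
      exact gen_step hk hp hxy s hs z u
    rw [h1]
    simp only [act_cons, act_nil, List.reverse_append, List.reverse_cons, List.reverse_nil,
      List.nil_append, List.cons_append, List.cons.injEq, and_true]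
    rcases hs with (⟨i, hi, rfl⟩ | ⟨j, hj, rfl⟩) | rfl
    · cases i with
      | zero => simp [KTrans, gen, II, DD]
      | succ i => 
        have : (gen k p x y (.a (i + 1))).f [] = 0 := by simp [gen, II]
        rw [this]
        simp only [KTrans]
        split_ifs <;> simp
    · have : (gen k p x y (.b j)).f [] = 0 := by
        unfold gen
        simp [II]
        omega
      rw [this]
      cases j <;> simp only [KTrans] <;> split_ifs <;> simp
    · simp [KTrans, gen, II]

/-- generating portraits -/
def PG (k p : ℕ) (x y : ℕ → ℤ) : Set Por := {g | ∃ s, IsGen k p s ∧ g = gen k p x y s}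

lemma Kgroup_eq (hk : 1 ≤ k) (hp : 1 ≤ p) (hxy : x (k - 1) ≠ y (p - 1)) :
    (Subgroup.closure (PG k p x y)).map theta = Kgroup k p x y := by
  have key : ∀ s, IsGen k p s → ⇑(theta (gen k p x y s)) = stateAct k p x y s := by
    intro s hs
    funext v
    rw [theta_apply, stateAct_eq hk hp hxy v s (Or.inl hs)]
  rw [MonoidHom.map_closure, Kgroup]
  congr 1
  ext g
  constructor
  · rintro ⟨_, ⟨s, hs, rfl⟩, rfl⟩
    exact ⟨s, hs, key s hs⟩
  · rintro ⟨s, hs, h⟩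
    refine ⟨_, ⟨s, hs, rfl⟩, ?_⟩
    apply DFunLike.coe_injective
    rw [key s hs, h]


/-- reversed prefix of a ray -/
def pre (r : ℕ → ℤ) : ℕ → List ℤ
  | 0 => []
  | n + 1 => r n :: pre r n

@[simp] lemma pre_length (r n) : (pre r n).length = n := by
  induction n <;> simp_all [pre]

lemma pre_rev (r n) : (pre r n).reverse = (List.range n).map r := by
  induction n with
  | zero => rfl
  | succ n ih => simp [pre, ih, List.range_succ]

lemma pre_get (r n t) (h : t < n) : (pre r n).reverse[t]? = some (r t) := by
  rw [pre_rev]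
  simp [h]

lemma pre_inj {r r' : ℕ → ℤ} {n} (h : pre r n = pre r' n) (t) (ht : t < n) : r t = r' t := by
  have := pre_get r n t ht
  rw [h, pre_get r' n t ht] at this
  simpa using this.symm

lemma pre_congr {r r' : ℕ → ℤ} {n} (h : ∀ t < n, r t = r' t) : pre r n = pre r' n := by
  induction n with
  | zero => rfl
  | succ n ih => rw [pre, pre, h n (by omega), ih fun t ht => h t (by omega)]

/-- action on rays -/
def ract (g : Por) (r : ℕ → ℤ) : ℕ → ℤ := fun n => r n + g.f (pre r n)

lemma pre_ract (g r n) : pre (ract g r) n = act g.f (pre r n) := by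
  induction n with
  | zero => rfl
  | succ n ih => rw [pre, ih]; rfl

lemma ract_mul (a b r) : ract (a * b) r = ract a (ract b r) := by
  funext n
  simp only [ract, mul_f, add_assoc]
  rw [← pre_ract]

lemma ract_one (r) : ract 1 r = r := by
  funext n
  simp [ract, one_f]

/-- permutation of rays -/
def rperm (g : Por) : Equiv.Perm (ℕ → ℤ) where
  toFun := ract g
  invFun := ract g⁻¹
  left_inv r := by rw [← ract_mul, inv_mul_cancel, ract_one]
  right_inv r := by rw [← ract_mul, mul_inv_cancel, ract_one]

lemma rperm_apply (g r) : rperm g r = ract g r := rfl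
lemma rperm_symm_apply (g r) : (rperm g).symm r = ract g⁻¹ r := rfl

/-- critical rays -/
def xi (p : ℕ) (y : ℕ → ℤ) (j : ℕ) (t : ℕ) : ℤ := y ((((j : ℤ) - 1 - t) % (p : ℤ)).toNat)

lemma xi_per (j t) : xi p y j (t + p) = xi p y j t := by
  unfold xi
  congr 2
  push_cast
  rw [show ((j : ℤ) - 1 - (t + p)) = j - 1 - t + p * (-1) by ring, Int.add_mul_emod_self_left]

lemma xi_val (m i : ℕ) (hi : i < m) : xi p y (m % p) (m - 1 - i) = y (i % p) := by
  unfold xi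
  congr 1
  have : (((m % p : ℕ) : ℤ) - 1 - ((m - 1 - i : ℕ) : ℤ)) % (p : ℤ) = ((i % p : ℕ) : ℤ) := by
    rw [show ((m - 1 - i : ℕ) : ℤ) = m - 1 - i by omega]
    push_cast
    rw [show (m : ℤ) % p - 1 - (m - 1 - i) = (m : ℤ) % p - (m - i) by ring, Int.emod_sub_emod]
    congr 1
    ring
  rw [this, Int.toNat_natCast]

lemma xi_val2 (hp : 1 ≤ p) (m : ℕ) : xi p y (m % p) m = y (p - 1) := by
  unfold xi
  congr 1
  have : (((m % p : ℕ) : ℤ) - 1 - (m : ℤ)) % (p : ℤ) = ((p - 1 : ℕ) : ℤ) := by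
    push_cast
    rw [sub_sub, Int.emod_sub_emod, show (m : ℤ) - (1 + m) = (p - 1) + p * (-1) by ring,
      Int.add_mul_emod_self_left, Int.emod_eq_of_lt (by omega) (by omega)]
    omega
  rw [this, Int.toNat_natCast]

lemma DD_add (m : ℕ) : DD k p x y (k + m) = DD k p x y k ++ pre (xi p y (m % p)) m := by
  rw [DD, List.range_add, List.map_append, ← DD]
  congr 1
  rw [← List.reverse_inj, pre_rev, List.map_map]
  apply List.ext_getElem
  · simp
  · intro t h1 h2
    simp only [List.length_map, List.length_range, List.length_reverse] at h1 h2
    simp only [List.getElem_reverse, List.getElem_map, List.length_map, List.length_range,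
      List.getElem_range, Function.comp]
    have h := xi_val (p := p) (y := y) m (m - 1 - t) (by omega)
    rw [show m - 1 - (m - 1 - t) = t by omega] at h
    rw [h, dd, if_neg (by omega)]
    congr 2
    omega

/-- structure of active words for `b j` -/
lemma active_b (hk : 1 ≤ k) (hp : 1 ≤ p) (hxy : x (k - 1) ≠ y (p - 1)) {j v}
    (h : (gen k p x y (.b j)).f v ≠ 0) : k ≤ v.length ∧
      (∀ t < v.length - k, v.reverse[t]? = some (xi p y j t)) ∧
      v.reverse[v.length - k]? ≠ some (xi p y j (v.length - k)) := by
  obtain ⟨h1, h2, h3⟩ := gen_ne.1 h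
  obtain ⟨m, hm⟩ := Nat.exists_eq_add_of_le h2
  rw [hm] at h1 h3 ⊢
  rw [Nat.add_sub_cancel_left] at h3 ⊢
  subst h3
  rw [DD_add] at h1
  refine ⟨by omega, ?_, ?_⟩
  · intro t ht
    rw [h1, List.reverse_append, List.getElem?_append_left (by simpa using ht), pre_get _ _ _ ht]
  · rw [h1, List.reverse_append, List.getElem?_append_right (by simp), xi_val2 hp]
    obtain ⟨k', rfl⟩ := Nat.exists_eq_add_of_le' hk
    rw [DD_succ]
    simp [dd] at hxy ⊢
    exact hxy

lemma active_a {i v} (h : (gen k p x y (.a i)).f v ≠ 0) : v.length = i := (gen_ne.1 h).2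

lemma active_ray (hk : 1 ≤ k) (hp : 1 ≤ p) (hxy : x (k - 1) ≠ y (p - 1)) {j r l}
    (h : (gen k p x y (.b j)).f (pre r l) ≠ 0) : k ≤ l ∧
      (∀ t < l - k, r t = xi p y j t) ∧ r (l - k) ≠ xi p y j (l - k) := by
  obtain ⟨h1, h2, h3⟩ := active_b hk hp hxy h
  rw [pre_length] at h1 h2 h3
  refine ⟨h1, fun t ht => ?_, ?_⟩
  · have := h2 t ht
    rw [pre_get _ _ _ (by omega)] at this
    simpa using this
  · rw [pre_get _ _ _ (by omega)] at h3
    simpa using h3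

lemma active_uniq (hk : 1 ≤ k) (hp : 1 ≤ p) (hxy : x (k - 1) ≠ y (p - 1)) {s r l l'}
    (hs : IsGen k p s) (h : (gen k p x y s).f (pre r l) ≠ 0)
    (h' : (gen k p x y s).f (pre r l') ≠ 0) : l = l' := by
  rcases hs with ⟨i, hi, rfl⟩ | ⟨j, hj, rfl⟩
  · have h1 := active_a h
    have h2 := active_a h'
    rw [pre_length] at h1 h2
    omega
  · obtain ⟨h1, h2, h3⟩ := active_ray hk hp hxy h
    obtain ⟨h1', h2', h3'⟩ := active_ray hk hp hxy h'
    rcases lt_trichotomy l l' with hl | hl | hl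
    · exact absurd (h2' _ (by omega)) h3
    · exact hl
    · exact absurd (h2 _ (by omega)) h3'

lemma boundary (hk : 1 ≤ k) (hp : 1 ≤ p) (hxy : x (k - 1) ≠ y (p - 1)) {s r l n j}
    (hs : IsGen k p s) (h : (gen k p x y s).f (pre r l) ≠ 0)
    (hr : ∀ t, n ≤ t → r t = xi p y j t) : l < n + (k + p) := by
  by_contra hl
  rcases hs with ⟨i, hi, rfl⟩ | ⟨i, hi, rfl⟩
  · have h1 := active_a h
    rw [pre_length] at h1
    omega
  · obtain ⟨h1, h2, h3⟩ := active_ray hk hp hxy h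
    apply h3
    obtain ⟨m, hm⟩ : ∃ m, l - k = m + p := ⟨l - k - p, by omega⟩
    rw [hm, hr _ (by omega), xi_per, xi_per, ← hr _ (by omega), h2 m (by omega)]


open Classical in
/-- lamp functions -/
noncomputable def ee (k p : ℕ) (x y : ℕ → ℤ) (q : (ℕ → ℤ) × ℕ) (v : List ℤ) : ℤ :=
  if k ≤ v.length ∧ (v.length - k) % p = q.2 ∧ v = DD k p x y k ++ pre q.1 (v.length - k)
    then 1 else 0

lemma gen_b_ee (j) : (gen k p x y (.b j)).f = ee k p x y (xi p y j, j) := by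
  funext v
  unfold gen ee II
  dsimp only
  congr 1
  rw [eq_iff_iff]
  constructor
  · rintro ⟨h1, h2, h3⟩
    refine ⟨h2, h3, ?_⟩
    obtain ⟨m, hm⟩ := Nat.exists_eq_add_of_le h2
    have hm' : v.length - k = m := by omega
    rw [hm'] at h3 ⊢
    rw [hm] at h1
    rw [h1, DD_add, h3]
  · rintro ⟨h2, h3, h1⟩
    refine ⟨?_, h2, h3⟩
    obtain ⟨m, hm⟩ := Nat.exists_eq_add_of_le h2
    have hm' : v.length - k = m := by omega
    rw [hm'] at h1 h3
    rw [hm, DD_add, h3, ← h1]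

lemma cl_gen_a (i) : cl (gen k p x y (.a i)).f = 0 := by
  change _ = cl (fun _ => 0)
  rw [cl_eq]
  refine ⟨i + 1, fun v hv => ?_⟩
  by_contra h
  have := active_a h
  omega

lemma xi_fixed (hk : 1 ≤ k) (hp : 1 ≤ p) (hxy : x (k - 1) ≠ y (p - 1)) (j) :
    ract (gen k p x y (.b j)) (xi p y j) = xi p y j := by
  funext t
  rw [ract, add_eq_left]
  by_contra h
  obtain ⟨h1, h2, h3⟩ := active_ray hk hp hxy h
  exact h3 rfl

lemma eventually_good (hk : 1 ≤ k) (hp : 1 ≤ p) (hxy : x (k - 1) ≠ y (p - 1)) {s}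
    (hs : IsGen k p s) (r : ℕ → ℤ) :
    ∃ M, ∀ m, M ≤ m → ∀ u : List ℤ, u.length < k →
      (gen k p x y s).f (u ++ pre r m) = 0 := by
  rcases hs with ⟨i, hi, rfl⟩ | ⟨i, hi, rfl⟩
  · refine ⟨i + 1, fun m hm u hu => ?_⟩
    by_contra h
    have := active_a h
    simp at this
    omega
  · have key : ∀ m (u : List ℤ), u.length < k → (gen k p x y (.b i)).f (u ++ pre r m) ≠ 0 →
        k ≤ u.length + m ∧ (∀ t < u.length + m - k, r t = xi p y i t) ∧
        r (u.length + m - k) ≠ xi p y i (u.length + m - k) := by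
      intro m u hu h
      obtain ⟨h1, h2, h3⟩ := active_b hk hp hxy h
      rw [List.length_append, pre_length] at h1 h2 h3
      have get : ∀ t < m, (u ++ pre r m).reverse[t]? = some (r t) := by
        intro t ht
        rw [List.reverse_append, List.getElem?_append_left (by simpa using ht), pre_get _ _ _ ht]
      refine ⟨h1, fun t ht => ?_, ?_⟩
      · have := h2 t ht
        rw [get t (by omega)] at this
        simpa using this
      · rw [get _ (by omega)] at h3
        simpa using h3
    by_cases hr : ∃ t, r t ≠ xi p y i t
    · obtain ⟨t, ht⟩ := hr
      refine ⟨t + k + 1, fun m hm u hu => ?_⟩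
      by_contra h
      exact ht ((key m u hu h).2.1 t (by omega))
    · push Not at hr
      refine ⟨0, fun m hm u hu => ?_⟩
      by_contra h
      exact (key m u hu h).2.2 (hr _)

lemma act_zero_append (g : List ℤ → ℤ) (w v : List ℤ)
    (h : ∀ u : List ℤ, u.length < w.length → g (u ++ v) = 0) :
    act g (w ++ v) = w ++ act g v := by
  induction w with
  | nil => rfl
  | cons z w ih =>
    rw [List.cons_append, act_cons, ih fun u hu => h u (by simp; omega), h w (by simp)]
    simp

lemma ee_equiv (hk : 1 ≤ k) (hp : 1 ≤ p) (hxy : x (k - 1) ≠ y (p - 1)) {s}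
    (hs : IsGen k p s) (r : ℕ → ℤ) (j : ℕ) :
    lin (gen k p x y s) (cl (ee k p x y (r, j))) =
      cl (ee k p x y (ract (gen k p x y s)⁻¹ r, j)) := by
  obtain ⟨M, hM⟩ := eventually_good hk hp hxy hs (ract (gen k p x y s)⁻¹ r)
  rw [lin_cl, cl_eq]
  refine ⟨M + k, fun v hv => ?_⟩
  unfold ee
  dsimp only
  congr 1
  rw [act_length, eq_iff_iff]
  refine and_congr_right fun _ => and_congr_right fun _ => ?_
  have h1 : pre r (v.length - k) =
      act (gen k p x y s).f (pre (ract (gen k p x y s)⁻¹ r) (v.length - k)) := by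
    rw [← pre_ract, ← ract_mul, mul_inv_cancel, ract_one]
  rw [h1, ← act_zero_append _ _ _ (fun u hu => hM _ (by omega) u (by simpa using hu))]
  constructor
  · intro h
    have := congrArg (act (gen k p x y s)⁻¹.f) h
    rwa [act_inv_act, act_inv_act] at this
  · intro h
    rw [← h]

end

end KG


namespace KG

lemma tent (F : Finset ℤ) (ε : ℝ) (hε : 0 < ε) : ∃ h : ℤ → ℝ, (Function.support h).Finite ∧
    (∀ z, 0 ≤ h z) ∧ (∀ z, h z ≤ 1) ∧ (∀ z ∈ F, h z = 1) ∧
    ∀ E : Finset ℤ, ∑ z ∈ E, (h (z + 1) - h z) ^ 2 ≤ ε := by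
  let R : ℕ := F.sup Int.natAbs
  obtain ⟨L, hL1, hL2⟩ : ∃ L : ℕ, R + 2 ≤ L ∧ 4 / ε ≤ L := by
    obtain ⟨m, hm⟩ := exists_nat_ge (4 / ε)
    exact ⟨max m (R + 2), le_max_right _ _, hm.trans (by exact_mod_cast le_max_left _ _)⟩
  have hL0 : (0 : ℝ) < L := by
    have : 0 < L := by omega
    exact_mod_cast this
  let h : ℤ → ℝ := fun z => max 0 (min 1 ((R + L - |(z : ℝ)|) / L))
  have h0 : ∀ z : ℤ, (R + L : ℤ) ≤ |z| → h z = 0 := by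
    intro z hz
    have hz' : (R + L : ℝ) ≤ |(z : ℝ)| := by exact_mod_cast hz
    refine max_eq_left ((min_le_right _ _).trans ?_)
    exact div_nonpos_of_nonpos_of_nonneg (by linarith) hL0.le
  refine ⟨h, ?_, fun z => le_max_left _ _, fun z => max_le zero_le_one (min_le_left _ _), ?_, ?_⟩
  · refine (Set.finite_Icc (-(R + L : ℤ)) (R + L)).subset fun z hz => ?_
    have : |z| < R + L := by
      by_contra hc
      exact hz (h0 z (by omega))
    rw [abs_lt] at this
    exact ⟨by omega, by omega⟩
  · intro z hz
    have h1 : z.natAbs ≤ R := Finset.le_sup (f := Int.natAbs) hz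
    have h2 : |(z : ℝ)| ≤ R := by
      rw [← Int.cast_abs, Int.abs_eq_natAbs]
      exact_mod_cast h1
    have h3 : 1 ≤ (R + L - |(z : ℝ)|) / L := by
      rw [le_div_iff₀ hL0]
      linarith
    change max 0 (min 1 ((R + L - |(z : ℝ)|) / L)) = 1
    rw [min_eq_left h3]
    simp
  · intro E
    have hd : ∀ z : ℤ, (h (z + 1) - h z) ^ 2 ≤ (1 / L) ^ 2 := by
      intro z
      rw [sq_le_sq, abs_of_pos (by positivity : (0 : ℝ) < 1 / L)]
      have q1 := abs_max_sub_max_le_max 0 (min 1 ((R + L - |((z + 1 : ℤ) : ℝ)|) / L))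
        0 (min 1 ((R + L - |(z : ℝ)|) / L))
      have q2 := abs_min_sub_min_le_max 1 ((R + L - |((z + 1 : ℤ) : ℝ)|) / L)
        1 ((R + L - |(z : ℝ)|) / L)
      rw [sub_self, abs_zero, max_eq_right (b := |_|) (abs_nonneg _)] at q1 q2
      refine q1.trans (q2.trans ?_)
      rw [← sub_div, abs_div, abs_of_pos hL0]
      gcongr
      have q3 := abs_abs_sub_abs_le (z : ℝ) ((z + 1 : ℤ) : ℝ)
      push_cast at q3 ⊢
      rw [show (z : ℝ) - (z + 1) = -1 by ring, abs_neg, abs_one] at q3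
      rwa [show (R : ℝ) + L - |(z : ℝ) + 1| - (R + L - |(z : ℝ)|) = |(z : ℝ)| - |(z : ℝ) + 1| by ring]
    let J := Finset.Icc (-(R + L : ℤ) - 1) (R + L)
    have hz : ∀ z ∉ J, (h (z + 1) - h z) ^ 2 = 0 := by
      intro z hz
      rw [Finset.mem_Icc] at hz
      rw [h0 z, h0 (z + 1)]
      · simp
      · rw [le_abs]; omega
      · rw [le_abs]; omega
    calc ∑ z ∈ E, (h (z + 1) - h z) ^ 2 ≤ ∑ z ∈ E ∪ J, (h (z + 1) - h z) ^ 2 :=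
          Finset.sum_le_sum_of_subset_of_nonneg Finset.subset_union_left fun _ _ _ => sq_nonneg _
      _ = ∑ z ∈ J, (h (z + 1) - h z) ^ 2 :=
          (Finset.sum_subset Finset.subset_union_right fun z _ hzJ => hz z hzJ).symm
      _ ≤ ∑ z ∈ J, (1 / (L : ℝ)) ^ 2 := Finset.sum_le_sum fun z _ => hd z
      _ = (2 * R + 2 * L + 2) * (1 / L) ^ 2 := by
          rw [Finset.sum_const, nsmul_eq_mul]
          congr 1
          simp only [J, Int.card_Icc]
          rw [show ((R + L : ℤ) + 1 - (-(R + L : ℤ) - 1)).toNat = 2 * R + 2 * L + 2 by omega]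
          push_cast
          ring
      _ ≤ (4 * L) * (1 / L) ^ 2 := by
          gcongr
          have : 2 * R + 2 * L + 2 ≤ 4 * L := by omega
          exact_mod_cast this
      _ = 4 / L := by field_simp
      _ ≤ ε := by
          rw [div_le_iff₀ hL0]
          rw [div_le_iff₀ hε] at hL2
          linarith

/-- finite set of generating states -/
def GS (k p : ℕ) : Finset KState := (Finset.range k).image KState.a ∪ (Finset.range p).image KState.b

lemma mem_GS {k p s} : s ∈ GS k p ↔ IsGen k p s := by
  simp [GS, IsGen, eq_comm]

variable {k p : ℕ} {x y : ℕ → ℤ}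

lemma lev (n : ℕ) : ∀ (ε : ℝ), 0 < ε → ∀ V : Finset (List ℤ), ∃ φ : List ℤ → ℝ,
    (Function.support φ).Finite ∧ (∀ v, 0 ≤ φ v) ∧ (∀ v, φ v ≤ 1) ∧
    (∀ v ∈ V, v.length = n → φ v = 1) ∧
    ∀ s, IsGen k p s → ∀ E : Finset (List ℤ), (∀ v ∈ E, v.length = n) →
      ∑ v ∈ E, (φ (act (gen k p x y s).f v) - φ v) ^ 2 ≤ ε := by
  classical
  induction n with
  | zero =>
    intro ε hε V
    refine ⟨fun v => if v = [] then 1 else 0, ?_, ?_, ?_, ?_, ?_⟩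
    · refine (Set.finite_singleton []).subset fun v hv => ?_
      by_contra hc
      exact hv (if_neg hc)
    · intro v; dsimp only; split_ifs <;> simp
    · intro v; dsimp only; split_ifs <;> simp
    · intro v _ hv; simp [List.length_eq_zero_iff.1 hv]
    · intro s _ E hE
      rw [Finset.sum_eq_zero]
      · exact hε.le
      · intro v hv
        rw [List.length_eq_zero_iff.1 (hE v hv)]
        simp
  | succ n ih =>
    intro ε hε V
    obtain ⟨h, hf, h0, h1, hV, hE⟩ := tent (V.image List.headI) (ε / 2) (by positivity)
    set H : ℝ := (hf.toFinset.card : ℝ)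
    have hH0 : 0 ≤ H := Nat.cast_nonneg _
    have hH : ∀ A : Finset ℤ, ∑ z ∈ A, h z ^ 2 ≤ H := by
      intro A
      calc ∑ z ∈ A, h z ^ 2 ≤ ∑ z ∈ A ∪ hf.toFinset, h z ^ 2 :=
            Finset.sum_le_sum_of_subset_of_nonneg Finset.subset_union_left fun _ _ _ => sq_nonneg _
        _ = ∑ z ∈ hf.toFinset, h z ^ 2 :=
            (Finset.sum_subset Finset.subset_union_right fun z _ hz => by
              have : h z = 0 := by simpa using hz
              simp [this]).symm
        _ ≤ ∑ z ∈ hf.toFinset, (1 : ℝ) := Finset.sum_le_sum fun z _ =>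
            pow_le_one₀ (h0 z) (h1 z)
        _ = H := by simp [H]
    obtain ⟨φ, pf, p0, p1, pV, pE⟩ := ih (ε / (2 * (H + 1))) (by positivity)
      (V.image List.tail ∪ insert (DD k p x y n)
        ((GS k p).image fun s => act (gen k p x y s).f (DD k p x y n)))
    have pD : φ (DD k p x y n) = 1 := pV _ (by simp) (by simp)
    have pD' : ∀ s, IsGen k p s → φ (act (gen k p x y s).f (DD k p x y n)) = 1 := by
      intro s hs
      refine pV _ ?_ (by simp)
      refine Finset.mem_union_right _ (Finset.mem_insert_of_mem ?_)
      exact Finset.mem_image_of_mem _ (mem_GS.2 hs)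
    refine ⟨fun v => match v with | [] => 0 | z :: w => h z * φ w, ?_, ?_, ?_, ?_, ?_⟩
    · refine ((hf.prod pf).image fun q => q.1 :: q.2).subset ?_
      intro v hv
      match v, hv with
      | z :: w, hv =>
        have hv' : h z * φ w ≠ 0 := hv
        exact ⟨(z, w), ⟨left_ne_zero_of_mul hv', right_ne_zero_of_mul hv'⟩, rfl⟩
      | [], hv => exact absurd rfl hv
    · intro v
      match v with
      | [] => exact le_rfl
      | z :: w => exact mul_nonneg (h0 z) (p0 w)
    · intro v
      match v with
      | [] => exact zero_le_one
      | z :: w => exact mul_le_one₀ (h1 z) (p0 w) (p1 w)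
    · intro v hv hl
      match v, hl, hv with
      | z :: w, hl, hv =>
        have e1 : h z = 1 := hV z (Finset.mem_image.2 ⟨_, hv, rfl⟩)
        have e2 : φ w = 1 := pV w (Finset.mem_union_left _ (Finset.mem_image.2 ⟨_, hv, rfl⟩))
          (by simpa using hl)
        change h z * φ w = 1
        rw [e1, e2, one_mul]
    · intro s hs E hl
      set ψ : List ℤ → ℝ := fun v => match v with | [] => 0 | z :: w => h z * φ w with hψ
      have hc : ∀ z w, ψ (z :: w) = h z * φ w := fun z w => rfl
      let A := E.image List.headI
      let B := E.image List.tail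
      have hB : ∀ w ∈ B, w.length = n := by
        intro w hw
        obtain ⟨v, hv, rfl⟩ := Finset.mem_image.1 hw
        rw [List.length_tail, hl v hv]
        rfl
      have hsub : E ⊆ (B ×ˢ A).image (fun q => q.2 :: q.1) := by
        intro v hv
        refine Finset.mem_image.2 ⟨(v.tail, v.headI), Finset.mem_product.2
          ⟨Finset.mem_image_of_mem _ hv, Finset.mem_image_of_mem _ hv⟩, ?_⟩
        match v, hl v hv with
        | z :: w, _ => rfl
      have inner : ∀ w ∈ B, ∑ z ∈ A, (ψ (act (gen k p x y s).f (z :: w)) - ψ (z :: w)) ^ 2 ≤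
          (if w = DD k p x y n then ε / 2 else 0) +
            H * (φ (act (gen k p x y s).f w) - φ w) ^ 2 := by
        intro w hw
        rcases gen_f (k := k) (p := p) (x := x) (y := y) s w with hg | hg
        · simp only [act_cons, hc, hg, add_zero]
          have : ∑ z ∈ A, (h z * φ (act (gen k p x y s).f w) - h z * φ w) ^ 2 =
              (∑ z ∈ A, h z ^ 2) * (φ (act (gen k p x y s).f w) - φ w) ^ 2 := by
            rw [Finset.sum_mul]
            refine Finset.sum_congr rfl fun z _ => by ring
          rw [this]
          have h3 := mul_le_mul_of_nonneg_right (hH A)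
            (sq_nonneg (φ (act (gen k p x y s).f w) - φ w))
          have h4 : (0 : ℝ) ≤ if w = DD k p x y n then ε / 2 else 0 := by
            split_ifs <;> positivity
          linarith
        · have hw2 : w = DD k p x y n := by
            have := (gen_ne (k := k) (p := p) (x := x) (y := y) (s := s) (v := w)).1
              (by rw [hg]; exact one_ne_zero)
            rw [hB w hw] at this
            exact this.1
          simp only [act_cons, hc, hg]
          rw [if_pos hw2, hw2, pD, pD' s hs]
          simp only [mul_one]
          have := hE A
          nlinarith
      calc ∑ v ∈ E, (ψ (act (gen k p x y s).f v) - ψ v) ^ 2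
          ≤ ∑ v ∈ (B ×ˢ A).image (fun q => q.2 :: q.1),
              (ψ (act (gen k p x y s).f v) - ψ v) ^ 2 :=
            Finset.sum_le_sum_of_subset_of_nonneg hsub fun _ _ _ => sq_nonneg _
        _ = ∑ w ∈ B, ∑ z ∈ A, (ψ (act (gen k p x y s).f (z :: w)) - ψ (z :: w)) ^ 2 := by
            rw [Finset.sum_image, Finset.sum_product]
            rintro ⟨a, b⟩ _ ⟨c, d⟩ _ hq
            simp only [List.cons.injEq] at hq
            rw [hq.1, hq.2]
        _ ≤ ∑ w ∈ B, ((if w = DD k p x y n then ε / 2 else 0) +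
            H * (φ (act (gen k p x y s).f w) - φ w) ^ 2) := Finset.sum_le_sum inner
        _ ≤ ε / 2 + H * (ε / (2 * (H + 1))) := by
            rw [Finset.sum_add_distrib, ← Finset.mul_sum, Finset.sum_ite_eq']
            have := mul_le_mul_of_nonneg_left (pE s hs B hB) hH0
            have h4 : (if DD k p x y n ∈ B then ε / 2 else 0) ≤ ε / 2 := by
              split_ifs <;> linarith
            linarith
        _ ≤ ε := by
            have : H * (ε / (2 * (H + 1))) ≤ ε / 2 := by
              rw [mul_div_assoc', div_le_div_iff₀ (by positivity) (by norm_num)]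
              nlinarith
            linarith

/-- candidate boundary rays -/
def rr (k p : ℕ) (x y : ℕ → ℤ) (j l : ℕ) : ℕ → ℤ := fun t =>
  ((DD k p x y l).reverse[t]?).getD (xi p y j t)

lemma eq_rr {s r j l n} (h : (gen k p x y s).f (pre r l) ≠ 0) (hn : n ≤ l)
    (hr : ∀ t, n ≤ t → r t = xi p y j t) : r = rr k p x y j l := by
  have h1 := (gen_ne.1 h).1
  rw [pre_length] at h1
  funext t
  unfold rr
  rw [← h1]
  by_cases ht : t < l
  · rw [pre_get _ _ _ ht]; rfl
  · rw [List.getElem?_eq_none (by simpa using ht), hr t (by omega)]; rfl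

lemma recur (hk : 1 ≤ k) (hp : 1 ≤ p) (hxy : x (k - 1) ≠ y (p - 1)) (j : ℕ) (ε : ℝ) (hε : 0 < ε) :
    ∃ Φ : (ℕ → ℤ) → ℝ, (Function.support Φ).Finite ∧ (∀ r, 0 ≤ Φ r) ∧ (∀ r, Φ r ≤ 1) ∧
      Φ (xi p y j) = 1 ∧ ∀ s, IsGen k p s → ∀ E : Finset (ℕ → ℤ),
        ∑ r ∈ E, (Φ (ract (gen k p x y s) r) - Φ r) ^ 2 ≤ ε := by
  classical
  set C := k + p with hC
  obtain ⟨N, hN0, hN⟩ : ∃ N : ℕ, 0 < N ∧ 4 * (C : ℝ) / N ≤ ε / 2 := by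
    obtain ⟨m, hm⟩ := exists_nat_ge (4 * (C : ℝ) / (ε / 2))
    refine ⟨m + 1, by omega, ?_⟩
    rw [div_le_iff₀ (by positivity)] at hm ⊢
    push_cast
    nlinarith
  have hNR : (0 : ℝ) < N := by exact_mod_cast hN0
  choose φ pf p0 p1 pV pE using fun i : ℕ =>
    lev (k := k) (p := p) (x := x) (y := y) (i * C) (ε / 4) (by positivity)
      {pre (xi p y j) (i * C)}
  let B : ℕ → (ℕ → ℤ) → Prop := fun i r => ∀ t, i * C ≤ t → r t = xi p y j t
  let F : ℕ → (ℕ → ℤ) → ℝ := fun i r => if B i r then φ i (pre r (i * C)) else 0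
  have F0 : ∀ i r, 0 ≤ F i r := by
    intro i r
    simp only [F]
    split_ifs
    · exact p0 _ _
    · exact le_rfl
  have F1 : ∀ i r, F i r ≤ 1 := by
    intro i r
    simp only [F]
    split_ifs
    · exact p1 _ _
    · exact zero_le_one
  have Binj : ∀ i r r', B i r → B i r' → pre r (i * C) = pre r' (i * C) → r = r' := by
    intro i r r' h h' hh
    funext t
    by_cases ht : t < i * C
    · exact pre_inj hh t ht
    · rw [h t (by omega), h' t (by omega)]
  have Ff : ∀ i, (Function.support (F i)).Finite := by
    intro i
    have hB : ∀ r ∈ Function.support (F i), B i r := by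
      intro r hr
      by_contra hc
      exact hr (if_neg hc)
    refine Set.Finite.of_finite_image (f := fun r => pre r (i * C)) ((pf i).subset ?_) ?_
    · rintro _ ⟨r, hr, rfl⟩
      have : F i r = φ i (pre r (i * C)) := if_pos (hB r hr)
      rw [Function.mem_support, this] at hr
      exact hr
    · intro r hr r' hr' h
      exact Binj i r r' (hB r hr) (hB r' hr') h
  refine ⟨fun r => (∑ i ∈ Finset.range N, F i r) / N, ?_, ?_, ?_, ?_, ?_⟩
  · refine (Set.Finite.biUnion (Finset.range N).finite_toSet fun i _ => Ff i).subset ?_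
    intro r hr
    by_contra hc
    apply hr
    simp only [Set.mem_iUnion, not_exists, Function.mem_support, not_not] at hc
    dsimp only
    rw [Finset.sum_eq_zero fun i hi => hc i hi, zero_div]
  · intro r
    exact div_nonneg (Finset.sum_nonneg fun i _ => F0 i r) hNR.le
  · intro r
    rw [div_le_one hNR]
    calc _ ≤ ∑ i ∈ Finset.range N, (1 : ℝ) := Finset.sum_le_sum fun i _ => F1 i r
      _ = N := by simp
  · have : ∀ i ∈ Finset.range N, F i (xi p y j) = 1 := by
      intro i _
      simp only [F]
      rw [if_pos (fun t _ => rfl)]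
      exact pV i _ (by simp) (by simp)
    dsimp only
    rw [Finset.sum_congr rfl this]
    simp [hNR.ne']
  intro s hs E
  set g := gen k p x y s with hg
  let δ : ℕ → (ℕ → ℤ) → ℝ := fun i r => F i (ract g r) - F i r
  let Act : ℕ → (ℕ → ℤ) → Prop := fun i r => ∃ l, i * C ≤ l ∧ g.f (pre r l) ≠ 0
  let io : ℕ → (ℕ → ℤ) → ℝ := fun i r => if Act i r then 0 else δ i r
  let bd : ℕ → (ℕ → ℤ) → ℝ := fun i r => if Act i r then δ i r else 0
  let R : ℕ → Finset (ℕ → ℤ) := fun i =>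
    (Finset.Ico (i * C) (i * C + C)).image (rr k p x y j)
  have hR : ∀ i, (R i).card ≤ C := fun i => Finset.card_image_le.trans (by simp)
  have hio : ∀ i, ∑ r ∈ E, io i r ^ 2 ≤ ε / 4 := by
    intro i
    have h1 : ∀ r, io i r ^ 2 ≤ if B i r then
        (φ i (act g.f (pre r (i * C))) - φ i (pre r (i * C))) ^ 2 else 0 := by
      intro r
      simp only [io]
      by_cases hA : Act i r
      · rw [if_pos hA]
        split_ifs
        · simp [sq_nonneg]
        · simp
      · rw [if_neg hA]
        have hfix : ∀ t, i * C ≤ t → ract g r t = r t := by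
          intro t ht
          rw [ract, add_eq_left]
          by_contra hc
          exact hA ⟨t, ht, hc⟩
        have hBB : B i (ract g r) ↔ B i r :=
          forall_congr' fun t => forall_congr' fun ht => by rw [hfix t ht]
        simp only [δ, F, hBB]
        split_ifs with hb
        · rw [pre_ract]
        · simp
    calc ∑ r ∈ E, io i r ^ 2 ≤ ∑ r ∈ E, (if B i r then
          (φ i (act g.f (pre r (i * C))) - φ i (pre r (i * C))) ^ 2 else 0) :=
          Finset.sum_le_sum fun r _ => h1 r
      _ = ∑ r ∈ E with B i r, (φ i (act g.f (pre r (i * C))) - φ i (pre r (i * C))) ^ 2 :=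
          (Finset.sum_filter _ _).symm
      _ = ∑ v ∈ (E.filter (B i)).image (fun r => pre r (i * C)),
            (φ i (act g.f v) - φ i v) ^ 2 := by
          rw [Finset.sum_image]
          intro r hr r' hr' h
          simp only [Finset.coe_filter, Set.mem_ofPred_eq] at hr hr'
          exact Binj i r r' hr.2 hr'.2 h
      _ ≤ ε / 4 := by
          refine pE i s hs _ ?_
          intro v hv
          obtain ⟨r, _, rfl⟩ := Finset.mem_image.1 hv
          simp
  have hbd : ∀ i r, bd i r ≠ 0 → ∃ l, g.f (pre r l) ≠ 0 ∧ l / C = i ∧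
      (r ∈ R i ∨ ract g r ∈ R i) := by
    intro i r h
    have hA : Act i r := by
      by_contra hc
      exact h (if_neg hc)
    have h' : δ i r ≠ 0 := by
      simp only [bd, if_pos hA] at h
      exact h
    obtain ⟨l, hl, hgl⟩ := hA
    have hdiv : l < i * C + C → l / C = i := by
      intro hlt
      refine Nat.div_eq_of_lt_le hl ?_
      rw [Nat.add_mul, one_mul]
      exact hlt
    by_cases hb : B i r
    · have hlt := boundary hk hp hxy hs hgl hb
      refine ⟨l, hgl, hdiv hlt, Or.inl ?_⟩
      exact Finset.mem_image.2 ⟨l, Finset.mem_Ico.2 ⟨hl, hlt⟩, (eq_rr hgl hl hb).symm⟩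
    · have hb' : B i (ract g r) := by
        by_contra hc
        apply h'
        simp only [δ, F, if_neg hb, if_neg hc, sub_zero]
      have hpre : pre (ract g r) l = pre r l := by
        refine pre_congr fun t ht => ?_
        rw [ract, add_eq_left]
        by_contra hc
        have := active_uniq hk hp hxy hs hgl hc
        omega
      have hgl' : g.f (pre (ract g r) l) ≠ 0 := by rwa [hpre]
      have hlt := boundary hk hp hxy hs hgl' hb'
      refine ⟨l, hgl, hdiv hlt, Or.inr ?_⟩
      exact Finset.mem_image.2 ⟨l, Finset.mem_Ico.2 ⟨hl, hlt⟩, (eq_rr hgl' hl hb').symm⟩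
  have hbd1 : ∀ i r, bd i r ^ 2 ≤ 1 := by
    intro i r
    simp only [bd]
    split_ifs
    · have a1 := F0 i r
      have a2 := F1 i r
      have a3 := F0 i (ract g r)
      have a4 := F1 i (ract g r)
      rw [sq_le_one_iff_abs_le_one, abs_le]
      simp only [δ]
      constructor <;> linarith
    · simp
  have hbs : ∀ r, (∑ i ∈ Finset.range N, bd i r) ^ 2 ≤
      ∑ i ∈ Finset.range N, ((if r ∈ R i then (1 : ℝ) else 0) +
        (if ract g r ∈ R i then (1 : ℝ) else 0)) := by
    intro r
    have hnn : ∀ i, (0 : ℝ) ≤ (if r ∈ R i then (1 : ℝ) else 0) +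
        (if ract g r ∈ R i then (1 : ℝ) else 0) := by
      intro i
      split_ifs <;> norm_num
    by_cases hz : ∃ i ∈ Finset.range N, bd i r ≠ 0
    · obtain ⟨i, hi, hne⟩ := hz
      obtain ⟨l, hl1, hl2, hl3⟩ := hbd i r hne
      rw [Finset.sum_eq_single i]
      · refine (hbd1 i r).trans ?_
        refine le_trans ?_ (Finset.single_le_sum (fun i _ => hnn i) hi)
        rcases hl3 with h | h
        · rw [if_pos h]
          split_ifs <;> norm_num
        · rw [if_pos h]
          split_ifs <;> norm_num
      · intro i' _ hii
        by_contra hc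
        obtain ⟨l', hl1', hl2', _⟩ := hbd i' r hc
        have := active_uniq hk hp hxy hs hl1 hl1'
        subst this
        exact hii (hl2'.symm.trans hl2)
      · exact fun h => absurd hi h
    · push Not at hz
      rw [Finset.sum_eq_zero hz]
      simpa using Finset.sum_nonneg fun i _ => hnn i
  have hcard : ∀ i, ∑ r ∈ E, ((if r ∈ R i then (1 : ℝ) else 0) +
        (if ract g r ∈ R i then (1 : ℝ) else 0)) ≤ 2 * C := by
    intro i
    rw [Finset.sum_add_distrib, ← Finset.sum_filter, ← Finset.sum_filter]
    simp only [Finset.sum_const, nsmul_eq_mul, mul_one]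
    have c1 : (E.filter (fun r => r ∈ R i)).card ≤ C :=
      (Finset.card_le_card fun r hr => (Finset.mem_filter.1 hr).2).trans (hR i)
    have c2 : (E.filter (fun r => ract g r ∈ R i)).card ≤ C := by
      refine (Finset.card_le_card_of_injOn (ract g) (fun r hr => ?_) ?_).trans (hR i)
      · exact (Finset.mem_filter.1 hr).2
      · exact (rperm g).injective.injOn
    have c1' : ((E.filter (fun r => r ∈ R i)).card : ℝ) ≤ C := by exact_mod_cast c1
    have c2' : ((E.filter (fun r => ract g r ∈ R i)).card : ℝ) ≤ C := by exact_mod_cast c2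
    linarith
  have hpt : ∀ r, ((∑ i ∈ Finset.range N, F i (ract g r)) / N -
      (∑ i ∈ Finset.range N, F i r) / N) ^ 2 ≤
      2 / N * ∑ i ∈ Finset.range N, io i r ^ 2 +
      2 / N ^ 2 * ∑ i ∈ Finset.range N, ((if r ∈ R i then (1 : ℝ) else 0) +
        (if ract g r ∈ R i then (1 : ℝ) else 0)) := by
    intro r
    have e1 : (∑ i ∈ Finset.range N, F i (ract g r)) / N - (∑ i ∈ Finset.range N, F i r) / N =
        (∑ i ∈ Finset.range N, io i r + ∑ i ∈ Finset.range N, bd i r) / N := by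
      rw [← sub_div, ← Finset.sum_sub_distrib, ← Finset.sum_add_distrib]
      congr 1
      refine Finset.sum_congr rfl fun i _ => ?_
      simp only [io, bd, δ]
      split_ifs <;> ring
    rw [e1, div_pow]
    have e2 : (∑ i ∈ Finset.range N, io i r) ^ 2 ≤ N * ∑ i ∈ Finset.range N, io i r ^ 2 := by
      simpa using sq_sum_le_card_mul_sum_sq (s := Finset.range N) (f := fun i => io i r)
    have e3 := hbs r
    set a := ∑ i ∈ Finset.range N, io i r
    set b := ∑ i ∈ Finset.range N, bd i r
    set a' := ∑ i ∈ Finset.range N, io i r ^ 2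
    set b' := ∑ i ∈ Finset.range N, ((if r ∈ R i then (1 : ℝ) else 0) +
        (if ract g r ∈ R i then (1 : ℝ) else 0))
    have e4 : 2 / (N : ℝ) * a' + 2 / (N : ℝ) ^ 2 * b' = (2 * N * a' + 2 * b') / N ^ 2 := by
      field_simp
    rw [e4]
    gcongr
    nlinarith [sq_nonneg (a - b)]
  calc _ ≤ ∑ r ∈ E, (2 / N * ∑ i ∈ Finset.range N, io i r ^ 2 +
      2 / N ^ 2 * ∑ i ∈ Finset.range N, ((if r ∈ R i then (1 : ℝ) else 0) +
        (if ract g r ∈ R i then (1 : ℝ) else 0))) := Finset.sum_le_sum fun r _ => hpt r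
    _ = 2 / N * ∑ i ∈ Finset.range N, ∑ r ∈ E, io i r ^ 2 +
      2 / N ^ 2 * ∑ i ∈ Finset.range N, ∑ r ∈ E, ((if r ∈ R i then (1 : ℝ) else 0) +
        (if ract g r ∈ R i then (1 : ℝ) else 0)) := by
        rw [Finset.sum_add_distrib, ← Finset.mul_sum, ← Finset.mul_sum,
          Finset.sum_comm (s := E), Finset.sum_comm (s := E)]
    _ ≤ 2 / N * ∑ i ∈ Finset.range N, (ε / 4) + 2 / N ^ 2 * ∑ i ∈ Finset.range N, (2 * C : ℝ) := by
        gcongr with i _ i _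
        · exact hio i
        · exact hcard i
    _ = ε / 2 + 4 * C / N := by
        simp only [Finset.sum_const, Finset.card_range, nsmul_eq_mul]
        field_simp
        ring
    _ ≤ ε := by linarith

end KG


namespace KG

lemma energy_symm {X : Type} (σ : Equiv.Perm X) (Φ : X → ℝ) (ε : ℝ)
    (h : ∀ E : Finset X, ∑ r ∈ E, (Φ (σ r) - Φ r) ^ 2 ≤ ε) (E : Finset X) :
    ∑ r ∈ E, (Φ (σ.symm r) - Φ r) ^ 2 ≤ ε := by
  classical
  have := h (E.map σ.symm.toEmbedding)
  rw [Finset.sum_map] at this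
  refine le_trans (le_of_eq (Finset.sum_congr rfl fun r _ => ?_)) this
  simp only [Equiv.coe_toEmbedding, Equiv.apply_symm_apply]
  ring

lemma main_AI {k p : ℕ} {x y : ℕ → ℤ} (hk : 1 ≤ k) (hp : 1 ≤ p) (hxy : x (k - 1) ≠ y (p - 1))
    (ε : ℝ) (hε : 0 < ε) : ∃ P : FProb YY, ∀ s, IsGen k p s → P.AI (aff (gen k p x y s)) ε := by
  classical
  obtain ⟨P, hP⟩ := lamp (X := (ℕ → ℤ) × ℕ) (ι := GS k p) (fun q => cl (ee k p x y q))
    (fun s => aff (gen k p x y s.1)) (fun s => lin (gen k p x y s.1))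
    (fun s => cl (gen k p x y s.1).f) (fun s q => rfl)
    (fun s => (rperm (gen k p x y s.1)).symm.prodCongr (Equiv.refl ℕ))
    (fun s q => by
      obtain ⟨r, j⟩ := q
      exact ee_equiv hk hp hxy (mem_GS.1 s.2) r j)
    {q | q.2 < p ∧ q.1 = xi p y q.2}
    (fun s => by
      rcases mem_GS.1 s.2 with ⟨i, hi, h⟩ | ⟨j, hj, h⟩
      · left
        rw [h, cl_gen_a]
      · right
        refine ⟨(xi p y j, j), ⟨hj, rfl⟩, ?_, ?_⟩
        · rw [h]
          refine Prod.ext ?_ rfl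
          change (rperm (gen k p x y (.b j))).symm (xi p y j) = xi p y j
          rw [Equiv.symm_apply_eq, rperm_apply, xi_fixed hk hp hxy]
        · rw [h, gen_b_ee])
    (fun η hη => by
      choose Φ h1 h2 h3 h4 h5 using fun j =>
        recur hk hp hxy j (η / p) (by have : (0:ℝ) < p := (by exact_mod_cast hp); positivity)
      refine ⟨fun q => if q.2 < p then Φ q.2 q.1 else 0, ?_, ?_, ?_, ?_, ?_⟩
      · refine (Set.Finite.biUnion (Finset.range p).finite_toSet
          (fun j _ => (h1 j).image fun r => (r, j))).subset ?_
        rintro ⟨r, j⟩ hq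
        rw [Function.mem_support] at hq
        dsimp only at hq
        split_ifs at hq with hj
        · simp only [Set.mem_iUnion]
          exact ⟨j, by simpa using hj, r, hq, rfl⟩
        · exact absurd rfl hq
      · intro q
        dsimp only
        split_ifs
        · exact h2 _ _
        · exact le_rfl
      · intro q
        dsimp only
        split_ifs
        · exact h3 _ _
        · exact zero_le_one
      · rintro ⟨r, j⟩ ⟨hj, hr⟩
        dsimp only at hj hr ⊢
        rw [if_pos hj, hr, h4]
      · intro s E
        set σ := rperm (gen k p x y s.1)
        have e : ∀ j (A : Finset (ℕ → ℤ)), ∑ r ∈ A, (Φ j (σ.symm r) - Φ j r) ^ 2 ≤ η / p :=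
          fun j A => energy_symm σ (Φ j) _ (fun A => h5 j s.1 (mem_GS.1 s.2) A) A
        have hsub : E ⊆ ((E.image Prod.snd) ×ˢ (E.image Prod.fst)).image Prod.swap := by
          intro q hq
          refine Finset.mem_image.2 ⟨(q.2, q.1), Finset.mem_product.2
            ⟨Finset.mem_image_of_mem _ hq, Finset.mem_image_of_mem _ hq⟩, rfl⟩
        have hp0 : (0 : ℝ) < p := by exact_mod_cast hp
        refine (Finset.sum_le_sum_of_subset_of_nonneg hsub fun _ _ _ => sq_nonneg _).trans ?_
        rw [Finset.sum_image Prod.swap_injective.injOn, Finset.sum_product]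
        calc _ ≤ ∑ j ∈ E.image Prod.snd, (if j < p then η / p else 0) := by
              refine Finset.sum_le_sum fun j _ => ?_
              simp only [Prod.swap_prod_mk, Equiv.prodCongr_apply, Prod.map, Equiv.refl_apply]
              split_ifs with hj
              · exact e j _
              · simp
          _ ≤ ∑ j ∈ Finset.range p, η / p := by
              rw [← Finset.sum_filter]
              refine Finset.sum_le_sum_of_subset_of_nonneg ?_ fun _ _ _ => by positivity
              intro j hj
              simpa using (Finset.mem_filter.1 hj).2
          _ = η := by
              simp
              field_simp)
    ε hε
  exact ⟨P, fun s hs => hP ⟨s, mem_GS.2 hs⟩⟩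

lemma main_Am {k p : ℕ} {x y : ℕ → ℤ} (hk : 1 ≤ k) (hp : 1 ≤ p) (hxy : x (k - 1) ≠ y (p - 1)) :
    Am (Subgroup.closure (PG k p x y)) (lam Por) := by
  apply Am_of_rho
  apply Am.of_gens
  intro ε hε
  obtain ⟨P, hP⟩ := main_AI hk hp hxy ε hε
  refine ⟨P, ?_⟩
  rintro _ ⟨s, hs, rfl⟩
  refine (hP s hs).symm fun z => ?_
  rw [rho_apply, ← aff_mul, mul_inv_cancel, aff_one]

end KG

theorem stmt12 (k p : ℕ) (hk : 1 ≤ k) (hp : 1 ≤ p) (x y : ℕ → ℤ)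
    (hxy : x (k - 1) ≠ y (p - 1)) :
    ∃ μ : Set ↥(Kgroup k p x y) → ℝ,
      μ Set.univ = 1 ∧
      (∀ A : Set ↥(Kgroup k p x y), 0 ≤ μ A) ∧
      (∀ A B : Set ↥(Kgroup k p x y), Disjoint A B → μ (A ∪ B) = μ A + μ B) ∧
      (∀ (g : ↥(Kgroup k p x y)) (A : Set ↥(Kgroup k p x y)),
        μ ((fun a => g * a) '' A) = μ A) := by
  have hA := KG.main_Am hk hp hxy
  have hE := KG.Kgroup_eq hk hp hxy
  let θ : ↥(Subgroup.closure (KG.PG k p x y)) →* ↥(Kgroup k p x y) :=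
    (KG.theta.comp (Subgroup.subtype _)).codRestrict (Kgroup k p x y) (fun g => by
      rw [← hE]
      exact Subgroup.mem_map_of_mem _ g.2)
  refine KG.Am.measure _ hA θ ?_
  rintro ⟨g, hg⟩
  rw [← hE] at hg
  obtain ⟨h, hh, rfl⟩ := hg
  exact ⟨⟨h, hh⟩, rfl⟩
end
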